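/- arXiv:1103.4906 — 3 statements merged into one kernel-verified Lean document; each statement's English description precedes it below -/
import Mathlib

section
/- Let (q1,p1,q2,p2) be a rational solution of A5^(2)(α0,α1,α2,α3). Then: if p1 is identically 0 then α0 = 0; if p2 is identically 0 then α1 = 0; if q1·q2 + t is identically 0 (as a rational function of t) then α2 = 0; and if p1 + p2 − 1 is identically 0 then α3 = 0. -/
open Filter Topology Polynomial

/-- Evaluation of a rational function with complex coefficients at a point,
using its reduced numerator and denominator. -/
noncomputable def evR (f : RatFunc ℂ) (t : ℂ) : ℂ := f.num.eval t / f.denom.eval t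

/-- A rational function has no pole at `c` if its reduced denominator does not vanish at `c`. -/
def NoPoleAt (f : RatFunc ℂ) (c : ℂ) : Prop := f.denom.eval c ≠ 0

/-- `(q1, p1, q2, p2)` is a rational solution of the Sasano system
`A5^(2)(α0, α1, α2, α3)` (the parameter `α2` does not occur in the equations):
the four differential equations hold at every point `t ∈ ℂ` which is not a pole
of any of `q1, p1, q2, p2`. -/
def IsSasanoSol (a0 a1 a3 : ℂ) (q1 p1 q2 p2 : RatFunc ℂ) : Prop :=
  ∀ t : ℂ, NoPoleAt q1 t → NoPoleAt p1 t → NoPoleAt q2 t → NoPoleAt p2 t →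
    (t * deriv (evR q1) t =
      2 * (evR q1 t) ^ 2 * evR p1 t - (evR q1 t) ^ 2 + (a0 + a1 + a3) * evR q1 t
        - t + 4 * t * evR p2 t + 2 * evR q1 t * evR q2 t * evR p2 t) ∧
    (t * deriv (evR p1) t =
      -2 * evR q1 t * (evR p1 t) ^ 2 + 2 * evR q1 t * evR p1 t
        - (a0 + a1 + a3) * evR p1 t + a0 - 2 * evR p1 t * evR q2 t * evR p2 t) ∧
    (t * deriv (evR q2) t =
      2 * (evR q2 t) ^ 2 * evR p2 t - (evR q2 t) ^ 2 + (a0 + a1 + a3) * evR q2 t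
        - t + 4 * t * evR p1 t + 2 * evR q1 t * evR p1 t * evR q2 t) ∧
    (t * deriv (evR p2) t =
      -2 * evR q2 t * (evR p2 t) ^ 2 + 2 * evR q2 t * evR p2 t
        - (a0 + a1 + a3) * evR p2 t + a1 - 2 * evR q1 t * evR p1 t * evR p2 t)

/-! Each of `p₁`, `p₂`, `q₁ q₂ + t` and `p₁ + p₂ - 1` cuts out an invariant divisor of the system
when its parameter vanishes: along a solution, such a function `f` satisfies `t f' = k f + c` where
`c` is, respectively, `α₀`, `α₁`, `(1 - 2 (α₀ + α₁ + α₃)) t = 4 α₂ t` and `-α₃`. If `f` vanishes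
identically near a point, then `c` vanishes there, so a single regular point `t ≠ 0` settles all
four cases. -/

section LocalSolutions

variable {𝕜 : Type*} [NontriviallyNormedField 𝕜]

/-- The functions `(q₁, p₁, q₂, p₂)` are differentiable at `t` and satisfy the Sasano system
`A5^(2)(α₀, α₁, α₂, α₃)` at this one point. The parameter `α₂` does not occur in the
equations; the normalization of the sum of the parameters determines it. -/
structure IsSasanoSolAt (a0 a1 a3 : 𝕜) (q1 p1 q2 p2 : 𝕜 → 𝕜) (t : 𝕜) : Prop where
  differentiableAt_q1 : DifferentiableAt 𝕜 q1 t
  differentiableAt_p1 : DifferentiableAt 𝕜 p1 t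
  differentiableAt_q2 : DifferentiableAt 𝕜 q2 t
  differentiableAt_p2 : DifferentiableAt 𝕜 p2 t
  equation_q1 : t * deriv q1 t =
    2 * q1 t ^ 2 * p1 t - q1 t ^ 2 + (a0 + a1 + a3) * q1 t - t + 4 * t * p2 t
      + 2 * q1 t * q2 t * p2 t
  equation_p1 : t * deriv p1 t =
    -2 * q1 t * p1 t ^ 2 + 2 * q1 t * p1 t - (a0 + a1 + a3) * p1 t + a0
      - 2 * p1 t * q2 t * p2 t
  equation_q2 : t * deriv q2 t =
    2 * q2 t ^ 2 * p2 t - q2 t ^ 2 + (a0 + a1 + a3) * q2 t - t + 4 * t * p1 t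
      + 2 * q1 t * p1 t * q2 t
  equation_p2 : t * deriv p2 t =
    -2 * q2 t * p2 t ^ 2 + 2 * q2 t * p2 t - (a0 + a1 + a3) * p2 t + a1
      - 2 * q1 t * p1 t * p2 t

namespace IsSasanoSolAt

variable {a0 a1 a3 t : 𝕜} {q1 p1 q2 p2 : 𝕜 → 𝕜}

lemma mul_deriv_p1 (h : IsSasanoSolAt a0 a1 a3 q1 p1 q2 p2 t) :
    t * deriv p1 t =
      (2 * q1 t - 2 * q1 t * p1 t - 2 * q2 t * p2 t - (a0 + a1 + a3)) * p1 t + a0 := by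
  linear_combination h.equation_p1

lemma mul_deriv_p2 (h : IsSasanoSolAt a0 a1 a3 q1 p1 q2 p2 t) :
    t * deriv p2 t =
      (2 * q2 t - 2 * q1 t * p1 t - 2 * q2 t * p2 t - (a0 + a1 + a3)) * p2 t + a1 := by
  linear_combination h.equation_p2

lemma mul_deriv_q1_mul_q2_add_id (h : IsSasanoSolAt a0 a1 a3 q1 p1 q2 p2 t) :
    t * deriv (fun s => q1 s * q2 s + s) t =
      (4 * q1 t * p1 t + 4 * q2 t * p2 t - q1 t - q2 t + 2 * (a0 + a1 + a3)) * (q1 t * q2 t + t)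
        + (1 - 2 * (a0 + a1 + a3)) * t := by
  have hderiv : deriv (fun s => q1 s * q2 s + s) t = deriv q1 t * q2 t + q1 t * deriv q2 t + 1 :=
    ((h.differentiableAt_q1.hasDerivAt.mul h.differentiableAt_q2.hasDerivAt).add
      (hasDerivAt_id t)).deriv
  rw [hderiv]
  linear_combination q2 t * h.equation_q1 + q1 t * h.equation_q2

lemma mul_deriv_p1_add_p2_sub_one (h : IsSasanoSolAt a0 a1 a3 q1 p1 q2 p2 t) :
    t * deriv (fun s => p1 s + p2 s - 1) t =
      (-2 * q1 t * p1 t - 2 * q2 t * p2 t - (a0 + a1 + a3)) * (p1 t + p2 t - 1) + -a3 := by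
  have hderiv : deriv (fun s => p1 s + p2 s - 1) t = deriv p1 t + deriv p2 t :=
    ((h.differentiableAt_p1.hasDerivAt.add h.differentiableAt_p2.hasDerivAt).sub_const 1).deriv
  rw [hderiv]
  linear_combination h.equation_p1 + h.equation_p2

end IsSasanoSolAt

lemma eq_zero_of_mul_deriv_eq {f : 𝕜 → 𝕜} {t k c : 𝕜}
    (hderiv : t * deriv f t = k * f t + c) (hf : f =ᶠ[𝓝 t] 0) : c = 0 := by
  simpa [hf.deriv_eq, hf.eq_of_nhds] using hderiv.symm

theorem sasano_degenerate_components_general [NeZero (2 : 𝕜)] {a0 a1 a2 a3 t : 𝕜}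
    (hpar : a0 + a1 + 2 * a2 + a3 = 1 / 2) (ht : t ≠ 0) {q1 p1 q2 p2 : 𝕜 → 𝕜}
    (hsol : IsSasanoSolAt a0 a1 a3 q1 p1 q2 p2 t) :
    (p1 =ᶠ[𝓝 t] 0 → a0 = 0) ∧
    (p2 =ᶠ[𝓝 t] 0 → a1 = 0) ∧
    ((fun s => q1 s * q2 s + s) =ᶠ[𝓝 t] 0 → a2 = 0) ∧
    ((fun s => p1 s + p2 s - 1) =ᶠ[𝓝 t] 0 → a3 = 0) := by
  refine ⟨eq_zero_of_mul_deriv_eq hsol.mul_deriv_p1, eq_zero_of_mul_deriv_eq hsol.mul_deriv_p2,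
    fun hq => ?_,
    fun hp => neg_eq_zero.1 (eq_zero_of_mul_deriv_eq hsol.mul_deriv_p1_add_p2_sub_one hp)⟩
  have h2 : (2 : 𝕜) ≠ 0 := two_ne_zero
  have hconst : (1 - 2 * (a0 + a1 + a3)) * t = 0 :=
    eq_zero_of_mul_deriv_eq hsol.mul_deriv_q1_mul_q2_add_id hq
  have hcoeff : 1 - 2 * (a0 + a1 + a3) = 2 * (2 * a2) := by
    linear_combination -2 * hpar - mul_one_div_cancel h2
  simpa [hcoeff, h2, ht] using hconst

end LocalSolutions

section RationalFunctions

lemma evR_algebraMap (p : ℂ[X]) (t : ℂ) :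
    evR (algebraMap ℂ[X] (RatFunc ℂ) p) t = p.eval t := by
  simp [evR]

lemma evR_zero : evR 0 = 0 := by
  ext t
  simp [evR]

lemma eventually_cofinite_noPoleAt (f : RatFunc ℂ) : ∀ᶠ t in cofinite, NoPoleAt f t := by
  simpa [eventually_cofinite, NoPoleAt] using Polynomial.finite_setOfPred_isRoot f.denom_ne_zero

namespace NoPoleAt

variable {f g : RatFunc ℂ} {t : ℂ}

lemma eventually_nhds (hf : NoPoleAt f t) : ∀ᶠ s in 𝓝 t, NoPoleAt f s :=
  f.denom.continuous.continuousAt.eventually_ne hf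

lemma differentiableAt_evR (hf : NoPoleAt f t) : DifferentiableAt ℂ (evR f) t :=
  f.num.differentiableAt.div f.denom.differentiableAt hf

lemma evR_add_eventuallyEq (hf : NoPoleAt f t) (hg : NoPoleAt g t) :
    evR (f + g) =ᶠ[𝓝 t] fun s => evR f s + evR g s := by
  filter_upwards [hf.eventually_nhds, hg.eventually_nhds] with s hfs hgs using
    RatFunc.eval_add (RingHom.id ℂ) s hfs hgs

lemma evR_mul_eventuallyEq (hf : NoPoleAt f t) (hg : NoPoleAt g t) :
    evR (f * g) =ᶠ[𝓝 t] fun s => evR f s * evR g s := by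
  filter_upwards [hf.eventually_nhds, hg.eventually_nhds] with s hfs hgs using
    RatFunc.eval_mul (RingHom.id ℂ) s hfs hgs

lemma evR_mul_add_id_eventuallyEq_zero (hf : NoPoleAt f t) (hg : NoPoleAt g t)
    (h : f * g + RatFunc.X = 0) : (fun s => evR f s * evR g s + s) =ᶠ[𝓝 t] 0 := by
  have hfg : f * g = algebraMap ℂ[X] (RatFunc ℂ) (-X) := by
    rw [map_neg, RatFunc.algebraMap_X, eq_neg_of_add_eq_zero_left h]
  filter_upwards [hf.evR_mul_eventuallyEq hg] with s hs
  simp [← hs, hfg, evR_algebraMap, -map_neg]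

lemma evR_add_sub_one_eventuallyEq_zero (hf : NoPoleAt f t) (hg : NoPoleAt g t)
    (h : f + g - 1 = 0) : (fun s => evR f s + evR g s - 1) =ᶠ[𝓝 t] 0 := by
  filter_upwards [hf.evR_add_eventuallyEq hg] with s hs
  rw [Pi.zero_apply, ← hs, sub_eq_zero.1 h]
  simp [evR]

end NoPoleAt

lemma exists_ne_zero_noPoleAt (q1 p1 q2 p2 : RatFunc ℂ) :
    ∃ t : ℂ, t ≠ 0 ∧ NoPoleAt q1 t ∧ NoPoleAt p1 t ∧ NoPoleAt q2 t ∧ NoPoleAt p2 t :=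
  ((eventually_cofinite_ne 0).and ((eventually_cofinite_noPoleAt q1).and
    ((eventually_cofinite_noPoleAt p1).and ((eventually_cofinite_noPoleAt q2).and
      (eventually_cofinite_noPoleAt p2))))).exists

lemma IsSasanoSol.isSasanoSolAt {a0 a1 a3 t : ℂ} {q1 p1 q2 p2 : RatFunc ℂ}
    (hsol : IsSasanoSol a0 a1 a3 q1 p1 q2 p2) (hq1 : NoPoleAt q1 t) (hp1 : NoPoleAt p1 t)
    (hq2 : NoPoleAt q2 t) (hp2 : NoPoleAt p2 t) :
    IsSasanoSolAt a0 a1 a3 (evR q1) (evR p1) (evR q2) (evR p2) t :=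
  have ⟨equation_q1, equation_p1, equation_q2, equation_p2⟩ := hsol t hq1 hp1 hq2 hp2
  ⟨hq1.differentiableAt_evR, hp1.differentiableAt_evR, hq2.differentiableAt_evR,
    hp2.differentiableAt_evR, equation_q1, equation_p1, equation_q2, equation_p2⟩

end RationalFunctions

theorem sasano_degenerate_components (a0 a1 a2 a3 : ℂ)
    (hpar : a0 + a1 + 2 * a2 + a3 = 1 / 2)
    (q1 p1 q2 p2 : RatFunc ℂ)
    (hsol : IsSasanoSol a0 a1 a3 q1 p1 q2 p2) :
    (p1 = 0 → a0 = 0) ∧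
    (p2 = 0 → a1 = 0) ∧
    (q1 * q2 + RatFunc.X = 0 → a2 = 0) ∧
    (p1 + p2 - 1 = 0 → a3 = 0) := by
  obtain ⟨t, ht, hq1, hp1, hq2, hp2⟩ := exists_ne_zero_noPoleAt q1 p1 q2 p2
  obtain ⟨h0, h1, h2, h3⟩ :=
    sasano_degenerate_components_general hpar ht (hsol.isSasanoSolAt hq1 hp1 hq2 hp2)
  exact ⟨fun h => h0 (.of_eq (h ▸ evR_zero)), fun h => h1 (.of_eq (h ▸ evR_zero)),
    fun h => h2 (hq1.evR_mul_add_id_eventuallyEq_zero hq2 h),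
    fun h => h3 (hp1.evR_add_sub_one_eventuallyEq_zero hp2 h)⟩
end

section
/- Let c ∈ ℂ with c ≠ 0, and let (q1,p1,q2,p2) be a rational solution of A5^(2)(α0,α1,α2,α3) such that q1 has a pole at c and none of p1, q2, p2 has a pole at c. Then q1 has a simple pole at c and exactly one of the following holds: (1) the residue of q1 at c is c (i.e., (t−c)·q1(t) → c as t → c), p1(c) = 0 and the derivative of p1 at c equals −α0/c; or (2) the residue of q1 at c is −c, p1(c) = 1, the derivative of p1 at c equals (α1+α3)/c, q2(c) = 0 and p2(c) = 0. -/
open Filter Topology Polynomial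

/-!
Pass to `w = 1 / q1`, which is analytic at `c` with `w c = 0`. The equation for `q1` is of Riccati
type, so it becomes an equation for `w` without poles at `c`, which reads `c w' = 1 - 2 p1` at `c`.
Multiplying the other three equations by `w` and putting `t = c` gives
`p1 (1 - p1) = p1 q2 = p1 p2 = 0` there. Hence `p1` takes the value `0` or `1` at `c` and
`(c w')² = 1`, so that `w` has a simple zero and `q1` a simple pole with residue
`1 / w' = c (1 - 2 p1)`. The equation for `p1` contains `q1` only in the term
`2 p1 (1 - p1) / w`, which by L'Hôpital's rule tends to `2 (1 - 2 p1) p1' / w' = 2 c p1'`; this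
leaves the linear equation `c p1' = (α0 + α1 + α3) p1 - α0` at `c`.
-/

section PoleAnalysis

lemma eq_of_eventuallyEq_nhdsNE {X Y : Type*} [TopologicalSpace X] [TopologicalSpace Y] [T2Space Y]
    {f g : X → Y} {x : X} [(𝓝[≠] x).NeBot] (hf : ContinuousAt f x) (hg : ContinuousAt g x)
    (h : f =ᶠ[𝓝[≠] x] g) : f x = g x :=
  ((hf.eventuallyEq_nhds_iff_eventuallyEq_nhdsNE hg).1 h).eq_of_nhds

variable {𝕜 : Type*} [NontriviallyNormedField 𝕜] {f g : 𝕜 → 𝕜} {f' g' c : 𝕜}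

lemma tendsto_div_of_hasDerivAt_of_eq_zero (hf : HasDerivAt f f' c) (hg : HasDerivAt g g' c)
    (hfc : f c = 0) (hgc : g c = 0) (hg' : g' ≠ 0) :
    Tendsto (fun t ↦ f t / g t) (𝓝[≠] c) (𝓝 (f' / g')) := by
  refine (hf.tendsto_slope.div hg.tendsto_slope hg').congr' ?_
  filter_upwards [self_mem_nhdsWithin] with t ht
  simp [slope_def_field, hfc, hgc, div_div_div_cancel_right₀ (sub_ne_zero.2 ht)]

lemma exists_analyticAt_eventuallyEq_inv_of_meromorphicOrderAt_neg
    (hf : meromorphicOrderAt f c < 0) :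
    ∃ w : 𝕜 → 𝕜, AnalyticAt 𝕜 w c ∧ w c = 0 ∧ (∀ᶠ t in 𝓝[≠] c, w t ≠ 0) ∧
      f =ᶠ[𝓝[≠] c] w⁻¹ := by
  have hmero : MeromorphicAt f c := meromorphicAt_of_meromorphicOrderAt_ne_zero hf.ne
  set g := toMeromorphicNFAt f c with hg
  have hfg : f =ᶠ[𝓝[≠] c] g := hmero.eq_nhdsNE_toMeromorphicNFAt
  have hgc : g⁻¹ c = 0 := by simp [hg, hf.ne]
  have hg_lim : Tendsto g (𝓝[≠] c) (Bornology.cobounded 𝕜) :=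
    (tendsto_cobounded_of_meromorphicOrderAt_neg hf).congr' hfg
  have hg_order : 0 < meromorphicOrderAt g⁻¹ c :=
    (tendsto_zero_iff_meromorphicOrderAt_pos (hmero.congr hfg).inv).1
      (tendsto_inv₀_cobounded.comp hg_lim)
  refine ⟨g⁻¹, .of_meromorphicOrderAt_pos hg_order hgc, hgc, ?_, by rwa [inv_inv]⟩
  filter_upwards [hg_lim.eventually_ne_cobounded 0] with t ht using inv_ne_zero ht

end PoleAnalysis

lemma analyticAt_evR {f : RatFunc ℂ} {c : ℂ} (h : NoPoleAt f c) : AnalyticAt ℂ (evR f) c :=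
  (f.num.differentiable.analyticAt c).div (f.denom.differentiable.analyticAt c) h

lemma meromorphicAt_evR (f : RatFunc ℂ) (c : ℂ) : MeromorphicAt (evR f) c :=
  (f.num.differentiable.analyticAt c).meromorphicAt.div
    (f.denom.differentiable.analyticAt c).meromorphicAt

lemma eventually_noPoleAt (f : RatFunc ℂ) (c : ℂ) : ∀ᶠ t in 𝓝[≠] c, NoPoleAt f t := by
  filter_upwards [nhdsNE_of_nhdsNE_sdiff_finite univ_mem
    (finite_setOfPred_isRoot f.denom_ne_zero)] with t ht using ht.2

lemma meromorphicOrderAt_evR_neg {f : RatFunc ℂ} {c : ℂ} (h : ¬ NoPoleAt f c) :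
    meromorphicOrderAt (evR f) c < 0 := by
  have hdenom : f.denom.eval c = 0 := not_not.1 h
  by_contra! horder
  obtain ⟨g, hg, hfg⟩ := (meromorphicAt_evR f c).meromorphicOrderAt_nonneg_iff.1 horder
  have hnum : f.num.eval c = g c * f.denom.eval c := by
    refine eq_of_eventuallyEq_nhdsNE f.num.continuousAt
      (hg.continuousAt.mul f.denom.continuousAt) ?_
    filter_upwards [hfg, eventually_noPoleAt f c] with t ht hpole
    exact (div_eq_iff hpole).1 ht
  obtain ⟨a, b, hab⟩ := f.isCoprime_num_denom
  simpa [hnum, hdenom] using congrArg (eval c) hab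

section SasanoSystem

variable {𝕜 : Type*} [NontriviallyNormedField 𝕜]

/-- The equations of the Sasano system `A5^(2)(a0, a1, a2, a3)` at the single point `t`, for
functions that need not be rational. -/
structure SasanoEqs (a0 a1 a3 : 𝕜) (q1 p1 q2 p2 : 𝕜 → 𝕜) (t : 𝕜) : Prop where
  deriv_q1 : t * deriv q1 t =
    2 * q1 t ^ 2 * p1 t - q1 t ^ 2 + (a0 + a1 + a3) * q1 t - t + 4 * t * p2 t
      + 2 * q1 t * q2 t * p2 t
  deriv_p1 : t * deriv p1 t =
    -2 * q1 t * p1 t ^ 2 + 2 * q1 t * p1 t - (a0 + a1 + a3) * p1 t + a0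
      - 2 * p1 t * q2 t * p2 t
  deriv_q2 : t * deriv q2 t =
    2 * q2 t ^ 2 * p2 t - q2 t ^ 2 + (a0 + a1 + a3) * q2 t - t + 4 * t * p1 t
      + 2 * q1 t * p1 t * q2 t
  deriv_p2 : t * deriv p2 t =
    -2 * q2 t * p2 t ^ 2 + 2 * q2 t * p2 t - (a0 + a1 + a3) * p2 t + a1
      - 2 * q1 t * p1 t * p2 t

/-- A solution of the Sasano system on a punctured neighbourhood of `c` for which only `q1` has a
pole at `c`, seen in the coordinate `w = 1 / q1`, which is analytic at `c` and vanishes there. -/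
structure SasanoPole (a0 a1 a3 : 𝕜) (q1 p1 q2 p2 w : 𝕜 → 𝕜) (c : 𝕜) : Prop where
  eqs : ∀ᶠ t in 𝓝[≠] c, SasanoEqs a0 a1 a3 q1 p1 q2 p2 t
  analyticAt_p1 : AnalyticAt 𝕜 p1 c
  analyticAt_q2 : AnalyticAt 𝕜 q2 c
  analyticAt_p2 : AnalyticAt 𝕜 p2 c
  analyticAt_w : AnalyticAt 𝕜 w c
  w_eq_zero : w c = 0
  w_ne_zero : ∀ᶠ t in 𝓝[≠] c, w t ≠ 0
  q1_eq_inv : q1 =ᶠ[𝓝[≠] c] w⁻¹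

namespace SasanoPole

variable {a0 a1 a3 c : 𝕜} {q1 p1 q2 p2 w : 𝕜 → 𝕜}

lemma eq_zero_of_eventuallyEq_w_mul (h : SasanoPole a0 a1 a3 q1 p1 q2 p2 w c) {F G : 𝕜 → 𝕜}
    (hF : ContinuousAt F c) (hG : ContinuousAt G c) (hFG : F =ᶠ[𝓝[≠] c] fun t ↦ w t * G t) :
    F c = 0 := by
  have hw : ContinuousAt w c := h.analyticAt_w.continuousAt
  simpa [h.w_eq_zero] using eq_of_eventuallyEq_nhdsNE hF (hw.mul hG) hFG

lemma two_mul_p1_mul_one_sub_p1_eventuallyEq (h : SasanoPole a0 a1 a3 q1 p1 q2 p2 w c) :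
    (fun t ↦ 2 * (p1 t * (1 - p1 t))) =ᶠ[𝓝[≠] c] fun t ↦
      w t * (t * deriv p1 t + (a0 + a1 + a3) * p1 t - a0 + 2 * p1 t * q2 t * p2 t) := by
  filter_upwards [h.eqs, h.w_ne_zero, h.q1_eq_inv] with t ht hw hq1
  rw [ht.deriv_p1, hq1, Pi.inv_apply]
  field_simp
  ring

lemma two_mul_p1_mul_q2_eventuallyEq (h : SasanoPole a0 a1 a3 q1 p1 q2 p2 w c) :
    (fun t ↦ 2 * (p1 t * q2 t)) =ᶠ[𝓝[≠] c] fun t ↦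
      w t * (t * deriv q2 t - 2 * q2 t ^ 2 * p2 t + q2 t ^ 2 - (a0 + a1 + a3) * q2 t + t
        - 4 * t * p1 t) := by
  filter_upwards [h.eqs, h.w_ne_zero, h.q1_eq_inv] with t ht hw hq1
  rw [ht.deriv_q2, hq1, Pi.inv_apply]
  field_simp
  ring

lemma two_mul_p1_mul_p2_eventuallyEq (h : SasanoPole a0 a1 a3 q1 p1 q2 p2 w c) :
    (fun t ↦ 2 * (p1 t * p2 t)) =ᶠ[𝓝[≠] c] fun t ↦
      w t * (-2 * q2 t * p2 t ^ 2 + 2 * q2 t * p2 t - (a0 + a1 + a3) * p2 t + a1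
        - t * deriv p2 t) := by
  filter_upwards [h.eqs, h.w_ne_zero, h.q1_eq_inv] with t ht hw hq1
  rw [ht.deriv_p2, hq1, Pi.inv_apply]
  field_simp
  ring

variable [CompleteSpace 𝕜]

lemma mul_deriv_w_eventuallyEq (h : SasanoPole a0 a1 a3 q1 p1 q2 p2 w c) :
    (fun t ↦ t * deriv w t) =ᶠ[𝓝[≠] c] fun t ↦
      1 - 2 * p1 t - (a0 + a1 + a3 + 2 * q2 t * p2 t) * w t + t * (1 - 4 * p2 t) * w t ^ 2 := by
  filter_upwards [h.eqs, h.w_ne_zero, h.q1_eq_inv, h.q1_eq_inv.nhdsNE_deriv,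
    h.analyticAt_w.eventually_analyticAt.filter_mono nhdsWithin_le_nhds]
    with t ht hw hq1 hdq1 hwt
  have deriv_q1 := ht.deriv_q1
  rw [hdq1, deriv_inv'' hwt.differentiableAt hw, hq1, Pi.inv_apply] at deriv_q1
  field_simp at deriv_q1
  linear_combination -deriv_q1

lemma mul_deriv_w (h : SasanoPole a0 a1 a3 q1 p1 q2 p2 w c) :
    c * deriv w c = 1 - 2 * p1 c := by
  have hp1 := h.analyticAt_p1
  have hq2 := h.analyticAt_q2
  have hp2 := h.analyticAt_p2
  have hw := h.analyticAt_w
  simpa [h.w_eq_zero] using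
    eq_of_eventuallyEq_nhdsNE (by fun_prop) (by fun_prop) h.mul_deriv_w_eventuallyEq

lemma continuousAt_p1_cofactor (h : SasanoPole a0 a1 a3 q1 p1 q2 p2 w c) :
    ContinuousAt (fun t ↦
      t * deriv p1 t + (a0 + a1 + a3) * p1 t - a0 + 2 * p1 t * q2 t * p2 t) c := by
  have hp1 := h.analyticAt_p1
  have hq2 := h.analyticAt_q2
  have hp2 := h.analyticAt_p2
  fun_prop

variable [NeZero (2 : 𝕜)]

lemma p1_mul_one_sub_p1_eq_zero (h : SasanoPole a0 a1 a3 q1 p1 q2 p2 w c) :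
    p1 c * (1 - p1 c) = 0 := by
  have hp1 := h.analyticAt_p1
  refine (mul_eq_zero_iff_left two_ne_zero).1 ?_
  exact h.eq_zero_of_eventuallyEq_w_mul (by fun_prop) h.continuousAt_p1_cofactor
    h.two_mul_p1_mul_one_sub_p1_eventuallyEq

lemma p1_mul_q2_eq_zero (h : SasanoPole a0 a1 a3 q1 p1 q2 p2 w c) : p1 c * q2 c = 0 := by
  have hp1 := h.analyticAt_p1
  have hq2 := h.analyticAt_q2
  have hp2 := h.analyticAt_p2
  simpa [two_ne_zero] using
    h.eq_zero_of_eventuallyEq_w_mul (by fun_prop) (by fun_prop) h.two_mul_p1_mul_q2_eventuallyEq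

lemma p1_mul_p2_eq_zero (h : SasanoPole a0 a1 a3 q1 p1 q2 p2 w c) : p1 c * p2 c = 0 := by
  have hp1 := h.analyticAt_p1
  have hq2 := h.analyticAt_q2
  have hp2 := h.analyticAt_p2
  simpa [two_ne_zero] using
    h.eq_zero_of_eventuallyEq_w_mul (by fun_prop) (by fun_prop) h.two_mul_p1_mul_p2_eventuallyEq

lemma sq_mul_deriv_w (h : SasanoPole a0 a1 a3 q1 p1 q2 p2 w c) :
    (c * deriv w c) ^ 2 = 1 := by
  linear_combination (c * deriv w c + 1 - 2 * p1 c) * h.mul_deriv_w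
    - 4 * h.p1_mul_one_sub_p1_eq_zero

lemma ne_zero (h : SasanoPole a0 a1 a3 q1 p1 q2 p2 w c) : c ≠ 0 := by
  intro hc
  simpa [hc] using h.sq_mul_deriv_w

lemma deriv_w_ne_zero (h : SasanoPole a0 a1 a3 q1 p1 q2 p2 w c) : deriv w c ≠ 0 := by
  intro hw
  simpa [hw] using h.sq_mul_deriv_w

lemma tendsto_sub_mul_q1 (h : SasanoPole a0 a1 a3 q1 p1 q2 p2 w c) :
    Tendsto (fun t ↦ (t - c) * q1 t) (𝓝[≠] c) (𝓝 (c * (1 - 2 * p1 c))) := by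
  have residue : 1 / deriv w c = c * (1 - 2 * p1 c) := by
    rw [div_eq_iff h.deriv_w_ne_zero]
    linear_combination c * deriv w c * h.mul_deriv_w - h.sq_mul_deriv_w
  rw [← residue]
  refine (tendsto_div_of_hasDerivAt_of_eq_zero ((hasDerivAt_id c).sub_const c)
    h.analyticAt_w.differentiableAt.hasDerivAt (sub_self c) h.w_eq_zero h.deriv_w_ne_zero).congr' ?_
  filter_upwards [h.q1_eq_inv] with t hq1
  simp [hq1, div_eq_mul_inv]

lemma mul_deriv_p1 (h : SasanoPole a0 a1 a3 q1 p1 q2 p2 w c) :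
    c * deriv p1 c = (a0 + a1 + a3) * p1 c - a0 := by
  have hp1 : HasDerivAt p1 (deriv p1 c) c := h.analyticAt_p1.differentiableAt.hasDerivAt
  have hw : HasDerivAt w (deriv w c) c := h.analyticAt_w.differentiableAt.hasDerivAt
  have quotient := tendsto_div_of_hasDerivAt_of_eq_zero
    ((hp1.mul (hp1.const_sub 1)).const_mul 2) hw (by simp [h.p1_mul_one_sub_p1_eq_zero])
    h.w_eq_zero h.deriv_w_ne_zero
  have cofactor := h.continuousAt_p1_cofactor.tendsto.mono_left (nhdsWithin_le_nhds (s := {c}ᶜ))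
  have limits_eq := tendsto_nhds_unique (cofactor.congr' ?_) quotient
  · rw [eq_div_iff h.deriv_w_ne_zero] at limits_eq
    apply mul_right_cancel₀ h.deriv_w_ne_zero
    linear_combination -limits_eq + 2 * deriv p1 c * h.mul_deriv_w
      + 2 * p2 c * deriv w c * h.p1_mul_q2_eq_zero
  · filter_upwards [h.two_mul_p1_mul_one_sub_p1_eventuallyEq, h.w_ne_zero] with t ht hwt
    exact eq_div_of_mul_eq hwt ((mul_comm _ _).trans ht.symm)

end SasanoPole

lemma IsSasanoSol.eventually_sasanoEqs {a0 a1 a3 : ℂ} {q1 p1 q2 p2 : RatFunc ℂ}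
    (h : IsSasanoSol a0 a1 a3 q1 p1 q2 p2) (c : ℂ) :
    ∀ᶠ t in 𝓝[≠] c, SasanoEqs a0 a1 a3 (evR q1) (evR p1) (evR q2) (evR p2) t := by
  filter_upwards [eventually_noPoleAt q1 c, eventually_noPoleAt p1 c, eventually_noPoleAt q2 c,
    eventually_noPoleAt p2 c] with t hq1 hp1 hq2 hp2
  obtain ⟨deriv_q1, deriv_p1, deriv_q2, deriv_p2⟩ := h t hq1 hp1 hq2 hp2
  exact ⟨deriv_q1, deriv_p1, deriv_q2, deriv_p2⟩

theorem sasano_q1_pole_at_c_general [CompleteSpace 𝕜] [NeZero (2 : 𝕜)] {a0 a1 a3 c : 𝕜}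
    {q1 p1 q2 p2 : 𝕜 → 𝕜}
    (heqs : ∀ᶠ t in 𝓝[≠] c, SasanoEqs a0 a1 a3 q1 p1 q2 p2 t)
    (hq1 : meromorphicOrderAt q1 c < 0)
    (hp1 : AnalyticAt 𝕜 p1 c) (hq2 : AnalyticAt 𝕜 q2 c) (hp2 : AnalyticAt 𝕜 p2 c) :
    (∃ r : 𝕜, r ≠ 0 ∧ Tendsto (fun t ↦ (t - c) * q1 t) (𝓝[≠] c) (𝓝 r)) ∧
    Xor
      (Tendsto (fun t ↦ (t - c) * q1 t) (𝓝[≠] c) (𝓝 c) ∧ p1 c = 0 ∧ deriv p1 c = -a0 / c)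
      (Tendsto (fun t ↦ (t - c) * q1 t) (𝓝[≠] c) (𝓝 (-c)) ∧ p1 c = 1 ∧
        deriv p1 c = (a1 + a3) / c ∧ q2 c = 0 ∧ p2 c = 0) := by
  obtain ⟨w, hw, hwc, hw_ne, hq1w⟩ :=
    exists_analyticAt_eventuallyEq_inv_of_meromorphicOrderAt_neg hq1
  have pole : SasanoPole a0 a1 a3 q1 p1 q2 p2 w c := ⟨heqs, hp1, hq2, hp2, hw, hwc, hw_ne, hq1w⟩
  have residue := pole.tendsto_sub_mul_q1
  have deriv_p1 : deriv p1 c = ((a0 + a1 + a3) * p1 c - a0) / c := by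
    rw [← pole.mul_deriv_p1, mul_div_cancel_left₀ _ pole.ne_zero]
  rcases mul_eq_zero.1 pole.p1_mul_one_sub_p1_eq_zero with hp1c | hp1c
  · have residue_c : Tendsto (fun t ↦ (t - c) * q1 t) (𝓝[≠] c) (𝓝 c) := by
      simpa [hp1c] using residue
    exact ⟨⟨c, pole.ne_zero, residue_c⟩,
      .inl ⟨⟨residue_c, hp1c, by simp [deriv_p1, hp1c]⟩, by simp [hp1c]⟩⟩
  · replace hp1c : p1 c = 1 := (sub_eq_zero.1 hp1c).symm
    have residue_neg_c : Tendsto (fun t ↦ (t - c) * q1 t) (𝓝[≠] c) (𝓝 (-c)) := by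
      have value : c * (1 - 2 * p1 c) = -c := by rw [hp1c]; ring
      rwa [value] at residue
    exact ⟨⟨-c, neg_ne_zero.2 pole.ne_zero, residue_neg_c⟩, .inr ⟨⟨residue_neg_c, hp1c,
      by rw [deriv_p1, hp1c]; ring, by simpa [hp1c] using pole.p1_mul_q2_eq_zero,
      by simpa [hp1c] using pole.p1_mul_p2_eq_zero⟩, by simp [hp1c]⟩⟩

end SasanoSystem

theorem sasano_q1_pole_at_c (a0 a1 a2 a3 : ℂ)
    (hpar : a0 + a1 + 2 * a2 + a3 = 1 / 2)
    (c : ℂ) (hc : c ≠ 0)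
    (q1 p1 q2 p2 : RatFunc ℂ)
    (hsol : IsSasanoSol a0 a1 a3 q1 p1 q2 p2)
    (hq1 : ¬ NoPoleAt q1 c)
    (hp1 : NoPoleAt p1 c) (hq2 : NoPoleAt q2 c) (hp2 : NoPoleAt p2 c) :
    (∃ r : ℂ, r ≠ 0 ∧ Tendsto (fun t => (t - c) * evR q1 t) (𝓝[≠] c) (𝓝 r)) ∧
    Xor'
      (Tendsto (fun t => (t - c) * evR q1 t) (𝓝[≠] c) (𝓝 c) ∧
        evR p1 c = 0 ∧ deriv (evR p1) c = -a0 / c)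
      (Tendsto (fun t => (t - c) * evR q1 t) (𝓝[≠] c) (𝓝 (-c)) ∧
        evR p1 c = 1 ∧ deriv (evR p1) c = (a1 + a3) / c ∧
        evR q2 c = 0 ∧ evR p2 c = 0) :=
  sasano_q1_pole_at_c_general (hsol.eventually_sasanoEqs c) (meromorphicOrderAt_evR_neg hq1)
    (analyticAt_evR hp1) (analyticAt_evR hq2) (analyticAt_evR hp2)
end

section
/- Let (q1,p1,q2,p2) be a rational solution of A5^(2)(α0,α1,α2,α3). Then q1 and q2 have no pole at 0, and (−2α0+α3) − q1(0) ∈ ℤ and (−2α1+α3) − q2(0) ∈ ℤ (that is, the limit of q1 at infinity differs from its value at 0 by an integer, and similarly for q2). -/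
open Filter Topology Polynomial

/-!
Put `w = α₀ + α₁ + α₃ + 2 q₁p₁ + 2 q₂p₂` and `D = t d/dt`. The system becomes
`D q₁ = q₁ (w - q₁) - t (1 - 4 p₂)`, `D p₁ = p₁ (2 q₁ - w) + α₀` and the same with the indices and
`α₀`, `α₁` exchanged. Expand a rational solution in Laurent series at a point of `ℙ¹`. The operator
`D` preserves orders at `0` and `∞` and lowers them by at most one elsewhere, and comparing orders
in the equations shows that `q₁` has no pole at `0` or `∞` and at most simple poles elsewhere.

At `∞` the leading coefficients force `q₁ = -2 α₀ + α₃`. At `c ≠ 0` the residue of `q₁ dt / t` is an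
integer. Indeed `D p₁ = p₁ (2 q₁ - w) + α₀` and `D (p₁ + p₂ - 1) = -(p₁ + p₂ - 1) w - α₃` express
the residues of `2 q₁ - w` and of `w` through the orders of `p₁` and of `p₁ + p₂ - 1` whenever these
orders are at most zero, and the leading coefficients of the other equations settle the remaining
cases. By the residue theorem for `q₁ dt / t`, the value at `∞` minus the value at `0` is the sum of
these integers.
-/

namespace Sasano

open scoped LaurentSeries

noncomputable section

/-- Constants act on Laurent series through `HahnSeries.C`. Without this declaration instance search
finds `HahnSeries.powerSeriesAlgebra`, whose scalar action is not definitionally the module one. -/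
local instance laurentAlgebra {R : Type*} [CommRing R] : Algebra R R⸨X⸩ := HahnSeries.instAlgebra

section OrderFiltration

variable {R : Type*} [CommRing R]

variable (R) in
/-- The Laurent series of order at least `n`: the term `Xⁿ R⟦X⟧` of the `X`-adic filtration. -/
def orderGE (n : ℤ) : Submodule R R⸨X⸩ where
  carrier := {f | ∀ m < n, f.coeff m = 0}
  add_mem' hf hg m hm := by simp [hf m hm, hg m hm]
  zero_mem' := by simp
  smul_mem' a f hf m hm := by simp [hf m hm]

variable {f g : R⸨X⸩} {l m n : ℤ}

lemma coe_le_orderTop_iff_mem_orderGE : (n : WithTop ℤ) ≤ f.orderTop ↔ f ∈ orderGE R n := by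
  simp [HahnSeries.le_orderTop_iff_forall, orderGE]

lemma orderGE_antitone : Antitone (orderGE R) :=
  fun _ _ h _ hf m hm => hf m (hm.trans_le h)

lemma mem_orderGE_add_one (hf : f ∈ orderGE R n) (h : f.coeff n = 0) : f ∈ orderGE R (n + 1) :=
  fun m hm => (Int.lt_add_one_iff.mp hm).lt_or_eq.elim (hf m) fun e => e ▸ h

lemma exists_coeff_ne_zero_of_notMem_orderGE (hf : f ∉ orderGE R n) :
    ∃ m < n, f ∈ orderGE R m ∧ f.coeff m ≠ 0 := by
  rw [← coe_le_orderTop_iff_mem_orderGE, not_le] at hf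
  obtain ⟨m, hm⟩ := WithTop.ne_top_iff_exists.mp hf.ne_top
  exact ⟨m, by rwa [← hm, WithTop.coe_lt_coe] at hf, coe_le_orderTop_iff_mem_orderGE.mp hm.le,
    HahnSeries.coeff_orderTop_ne hm.symm⟩

lemma mul_mem_orderGE (hf : f ∈ orderGE R m) (hg : g ∈ orderGE R n) (h : l ≤ m + n := by lia) :
    f * g ∈ orderGE R l := by
  rw [← coe_le_orderTop_iff_mem_orderGE] at hf hg ⊢
  calc (l : WithTop ℤ) ≤ m + n := mod_cast h
    _ ≤ f.orderTop + g.orderTop := add_le_add hf hg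
    _ ≤ (f * g).orderTop := HahnSeries.orderTop_add_le_mul

lemma coeff_mul_of_mem_orderGE (hf : f ∈ orderGE R m) (hg : g ∈ orderGE R n)
    (h : m + n = l := by lia) : (f * g).coeff l = f.coeff m * g.coeff n := by
  subst h
  rw [HahnSeries.coeff_mul, Finset.sum_eq_single (m, n)]
  · rintro ⟨i, j⟩ hij hne
    obtain ⟨hi, hj, hadd⟩ := Finset.mem_antidiagonal.mp hij
    have him : m ≤ i := not_lt.mp fun h => hi (hf i h)
    have hjn : n ≤ j := not_lt.mp fun h => hj (hg j h)
    exact absurd (Prod.ext (by lia : i = m) (by lia : j = n)) hne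
  · intro hmn
    by_contra hne
    exact hmn (Finset.mem_antidiagonal.mpr
      ⟨left_ne_zero_of_mul hne, right_ne_zero_of_mul hne, rfl⟩)

lemma mem_orderGE_of_mul_mem [NoZeroDivisors R] (hf : f ∈ orderGE R m) (hf0 : f.coeff m ≠ 0)
    (hfg : f * g ∈ orderGE R l) : g ∈ orderGE R (l - m) := by
  by_contra hg
  obtain ⟨n, hn, hgn, hg0⟩ := exists_coeff_ne_zero_of_notMem_orderGE hg
  exact mul_ne_zero hf0 hg0 ((coeff_mul_of_mem_orderGE hf hgn).symm.trans (hfg (m + n) (by lia)))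

lemma mem_orderGE_of_mul_self_mem [NoZeroDivisors R]
    (h : ∀ m < n, f ∈ orderGE R m → f * f ∈ orderGE R (2 * m + 1)) : f ∈ orderGE R n := by
  by_contra hf
  obtain ⟨m, hm, hfm, hf0⟩ := exists_coeff_ne_zero_of_notMem_orderGE hf
  exact mul_self_ne_zero.mpr hf0 <|
    (coeff_mul_of_mem_orderGE hfm hfm (by ring)).symm.trans (h m hm hfm (2 * m) (by lia))

lemma algebraMap_mem_orderGE (a : R) (hn : n ≤ 0 := by lia) :
    algebraMap R R⸨X⸩ a ∈ orderGE R n := fun m hm => by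
  rw [← HahnSeries.C_eq_algebraMap, HahnSeries.C_apply,
    HahnSeries.coeff_single_of_ne (hm.trans_le hn).ne]

lemma single_mem_orderGE (n : ℤ) (a : R) : HahnSeries.single n a ∈ orderGE R n := fun _ hm =>
  HahnSeries.coeff_single_of_ne hm.ne

lemma one_mem_orderGE (hn : n ≤ 0 := by lia) : (1 : R⸨X⸩) ∈ orderGE R n := by
  simpa using algebraMap_mem_orderGE (1 : R) hn

@[simp]
lemma coeff_algebraMap (a : R) (n : ℤ) :
    (algebraMap R R⸨X⸩ a).coeff n = if n = 0 then a else 0 := by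
  rw [← HahnSeries.C_eq_algebraMap, HahnSeries.C_apply, HahnSeries.coeff_single]
  congr

@[simp]
lemma coeff_ofNat_mul (a : ℕ) [a.AtLeastTwo] (f : R⸨X⸩) (n : ℤ) :
    ((ofNat(a) : R⸨X⸩) * f).coeff n = ofNat(a) * f.coeff n := by
  rw [← HahnSeries.single_zero_ofNat, HahnSeries.coeff_single_zero_mul]

lemma ofNat_mul_mem_orderGE (a : ℕ) [a.AtLeastTwo] (hf : f ∈ orderGE R n) :
    (ofNat(a) : R⸨X⸩) * f ∈ orderGE R n := fun m hm => by
  rw [coeff_ofNat_mul, hf m hm, mul_zero]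

end OrderFiltration

section System

/-- The Sasano system of type `A₅⁽²⁾` in a ring `K` with derivation `D`, standing for `t d/dt`, and
independent variable `T`. The auxiliary unknown `w = α₀ + α₁ + α₃ + 2 q₁p₁ + 2 q₂p₂` makes each
equation a Riccati equation or a linear one. -/
structure IsSolution {A K : Type*} [CommRing A] [CommRing K] [Algebra A K] (D : K → K) (T : K)
    (a0 a1 a3 : A) (q1 p1 q2 p2 w : K) : Prop where
  w_eq : w = algebraMap A K (a0 + a1 + a3) + 2 * (q1 * p1) + 2 * (q2 * p2)
  q1_eq : D q1 = q1 * (w - q1) - T * (1 - 4 * p2)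
  p1_eq : D p1 = p1 * (2 * q1 - w) + algebraMap A K a0
  q2_eq : D q2 = q2 * (w - q2) - T * (1 - 4 * p1)
  p2_eq : D p2 = p2 * (2 * q2 - w) + algebraMap A K a1

namespace IsSolution

variable {A K L : Type*} [CommRing A] [CommRing K] [CommRing L] [Algebra A K] [Algebra A L]
  {a0 a1 a3 : A} {T q1 p1 q2 p2 w : K}

lemma swap {D : K → K} (h : IsSolution D T a0 a1 a3 q1 p1 q2 p2 w) :
    IsSolution D T a1 a0 a3 q2 p2 q1 p1 w :=
  ⟨by rw [h.w_eq, add_comm a1]; ring, h.q2_eq, h.p2_eq, h.q1_eq, h.p1_eq⟩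

lemma map {D : K → K} {E : L → L} (h : IsSolution D T a0 a1 a3 q1 p1 q2 p2 w) (ψ : K →ₐ[A] L)
    (hψ : ∀ f, E (ψ f) = ψ (D f)) :
    IsSolution E (ψ T) a0 a1 a3 (ψ q1) (ψ p1) (ψ q2) (ψ p2) (ψ w) where
  w_eq := by simp [map_ofNat, h.w_eq]
  q1_eq := by simp [map_ofNat, hψ, h.q1_eq]
  p1_eq := by simp [map_ofNat, hψ, h.p1_eq]
  q2_eq := by simp [map_ofNat, hψ, h.q2_eq]
  p2_eq := by simp [map_ofNat, hψ, h.p2_eq]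

lemma deriv_add_sub_one {D : Derivation A K K} (h : IsSolution D T a0 a1 a3 q1 p1 q2 p2 w) :
    D (p1 + p2 - 1) = (p1 + p2 - 1) * -w + algebraMap A K (-a3) := by
  have hw := h.w_eq
  simp only [map_add] at hw
  rw [map_sub, map_add, h.p1_eq, h.p2_eq, Derivation.map_one_eq_zero, map_neg]
  linear_combination -hw

end IsSolution

end System

section OrderBounds

variable {k : Type*} [Field k] {D : Derivation k k⸨X⸩ k⸨X⸩} {d n : ℤ}

/-- The derivation `D` lowers orders of Laurent series by at most `d`. -/
def LowersOrder (D : Derivation k k⸨X⸩ k⸨X⸩) (d : ℤ) : Prop :=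
  ∀ ⦃n f⦄, f ∈ orderGE k n → D f ∈ orderGE k (n - d)

lemma mem_orderGE_of_deriv_eq_mul_add (hD : LowersOrder D d) {p g : k⸨X⸩} {b : k}
    (hp : p ∉ orderGE k (d + 1)) (h : D p = p * g + algebraMap k k⸨X⸩ b) :
    g ∈ orderGE k (-d) := by
  obtain ⟨m, hm, hpm, hp0⟩ := exists_coeff_ne_zero_of_notMem_orderGE hp
  have hpg : p * g ∈ orderGE k (m - d) := by
    rw [← sub_eq_iff_eq_add.mpr h]
    exact sub_mem (hD hpm) (algebraMap_mem_orderGE b)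
  exact orderGE_antitone (by lia) (mem_orderGE_of_mul_mem hpm hp0 hpg)

lemma mem_orderGE_of_riccati (hD : LowersOrder D d) {q w s : k⸨X⸩}
    (hw : w ∈ orderGE k (-d)) (hs : s ∈ orderGE k (-2 * d - 1)) (h : D q = q * (w - q) - s) :
    q ∈ orderGE k (-d) := by
  refine mem_orderGE_of_mul_self_mem fun m hm hqm => ?_
  rw [show q * q = q * w - s - D q by linear_combination h]
  exact sub_mem (sub_mem (mul_mem_orderGE hqm hw) (orderGE_antitone (by lia) hs))
    (orderGE_antitone (by lia) (hD hqm))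

variable [CharZero k]

lemma mem_orderGE_of_ofNat_mul_mem (a : ℕ) [a.AtLeastTwo] {f : k⸨X⸩}
    (h : (ofNat(a) : k⸨X⸩) * f ∈ orderGE k n) : f ∈ orderGE k n :=
  fun m hm => by simpa using h m hm

lemma mem_orderGE_of_two_mul_sub_mem {q w : k⸨X⸩} (hw : w ∈ orderGE k n)
    (hq : 2 * q - w ∈ orderGE k n) : q ∈ orderGE k n :=
  mem_orderGE_of_ofNat_mul_mem 2 (by simpa using add_mem hq hw)

-- The right-hand side of a Riccati equation is `(w² - (2q - w)²)/4 - s`.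
lemma mem_orderGE_of_riccati_of_two_mul_sub_mem (hD : LowersOrder D d) {q w s : k⸨X⸩}
    (hg : 2 * q - w ∈ orderGE k (-d)) (hs : s ∈ orderGE k (-2 * d - 1))
    (h : D q = q * (w - q) - s) : w ∈ orderGE k (-d) := by
  refine mem_orderGE_of_mul_self_mem fun m hm hwm => ?_
  have hqm := mem_orderGE_of_two_mul_sub_mem hwm (orderGE_antitone hm.le hg)
  rw [show w * w = 4 * (D q + s) + (2 * q - w) * (2 * q - w) by linear_combination -4 * h]
  exact add_mem (ofNat_mul_mem_orderGE 4 (add_mem (orderGE_antitone (by lia) (hD hqm))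
    (orderGE_antitone (by lia) hs))) (mul_mem_orderGE hg hg)

lemma mem_orderGE_of_riccati_pair (hD : LowersOrder D d) {q1 q2 w s1 s2 : k⸨X⸩}
    (hg1 : 2 * q1 - w ∈ orderGE k (-d)) (hg2 : 2 * q2 - w ∈ orderGE k (-d))
    (hs : s1 + s2 ∈ orderGE k (-2 * d - 1)) (h1 : D q1 = q1 * (w - q1) - s1)
    (h2 : D q2 = q2 * (w - q2) - s2) : w ∈ orderGE k (-d) := by
  refine mem_orderGE_of_mul_self_mem fun m hm hwm => mem_orderGE_of_ofNat_mul_mem 2 ?_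
  have hqm {q : k⸨X⸩} (hg : 2 * q - w ∈ orderGE k (-d)) : D q ∈ orderGE k (2 * m + 1) :=
    orderGE_antitone (by lia)
      (hD (mem_orderGE_of_two_mul_sub_mem hwm (orderGE_antitone hm.le hg)))
  rw [show 2 * (w * w) = 4 * (D q1 + D q2 + (s1 + s2)) + (2 * q1 - w) * (2 * q1 - w)
    + (2 * q2 - w) * (2 * q2 - w) by linear_combination -4 * h1 - 4 * h2]
  exact add_mem (add_mem (ofNat_mul_mem_orderGE 4 (add_mem (add_mem (hqm hg1) (hqm hg2))
    (orderGE_antitone (by lia) hs))) (mul_mem_orderGE hg1 hg1)) (mul_mem_orderGE hg2 hg2)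

namespace IsSolution

variable {T q1 p1 q2 p2 w : k⸨X⸩} {a0 a1 a3 : k} {τ : ℤ}

lemma w_mem_orderGE_of_p1_notMem (hD : LowersOrder D d) (hT : T ∈ orderGE k (-2 * d - 1))
    (h : IsSolution D T a0 a1 a3 q1 p1 q2 p2 w)
    (hp1 : p1 ∉ orderGE k (d + 1)) (hp2 : p2 ∈ orderGE k 0) : w ∈ orderGE k (-d) :=
  mem_orderGE_of_riccati_of_two_mul_sub_mem hD
    (mem_orderGE_of_deriv_eq_mul_add hD hp1 h.p1_eq)
    (mul_mem_orderGE hT (sub_mem (one_mem_orderGE le_rfl) (ofNat_mul_mem_orderGE 4 hp2))) h.q1_eq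

lemma w_mem_orderGE (hd : 0 ≤ d) (hD : LowersOrder D d)
    (hT : T ∈ orderGE k (-2 * d - 1))
    (h : IsSolution D T a0 a1 a3 q1 p1 q2 p2 w) : w ∈ orderGE k (-d) := by
  by_cases hf : p1 + p2 - 1 ∈ orderGE k (d + 1)
  swap
  · simpa using neg_mem (mem_orderGE_of_deriv_eq_mul_add hD hf h.deriv_add_sub_one)
  have hf0 : p1 + p2 - 1 ∈ orderGE k 0 := orderGE_antitone (by lia) hf
  by_cases hp1 : p1 ∈ orderGE k (d + 1)
  · have hp2 : p2 - 1 ∈ orderGE k (d + 1) := by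
      rw [show p2 - 1 = p1 + p2 - 1 - p1 by ring]
      exact sub_mem hf hp1
    refine h.swap.w_mem_orderGE_of_p1_notMem hD hT (fun hp2' => ?_)
      (orderGE_antitone (by lia) hp1)
    simpa using sub_mem hp2' hp2 0 (by lia)
  by_cases hp2 : p2 ∈ orderGE k 0
  · exact h.w_mem_orderGE_of_p1_notMem hD hT hp1 hp2
  refine mem_orderGE_of_riccati_pair hD (mem_orderGE_of_deriv_eq_mul_add hD hp1 h.p1_eq)
    (mem_orderGE_of_deriv_eq_mul_add hD (mt (orderGE_antitone (by lia) ·) hp2) h.p2_eq)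
    ?_ h.q1_eq h.q2_eq
  rw [show T * (1 - 4 * p2) + T * (1 - 4 * p1) = -(T * (2 + 4 * (p1 + p2 - 1))) by ring]
  refine neg_mem (mul_mem_orderGE hT (add_mem ?_ (ofNat_mul_mem_orderGE 4 hf0)))
  simpa using ofNat_mul_mem_orderGE 2 (one_mem_orderGE (R := k) le_rfl)

-- If `q₁` had a pole of too high order `-n`, then `p₂` would be forced to have order `2n - τ` and
-- `q₂` and `p₁` to vanish so strongly that `T` cannot be balanced in the equation for `q₂`.
lemma q1_mem_orderGE_of_q2_mem (hd : 0 ≤ d) (hD : LowersOrder D d) (hT : T ∈ orderGE k τ)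
    (hT0 : T.coeff τ ≠ 0) (hτ : -2 * d - 1 ≤ τ)
    (h : IsSolution D T a0 a1 a3 q1 p1 q2 p2 w)
    (hw : w ∈ orderGE k (-d)) (hp1 : p1 ∈ orderGE k (d + 1)) (hq2 : q2 ∈ orderGE k (-d)) :
    q1 ∈ orderGE k (-d) := by
  by_contra hq1
  obtain ⟨n, hn, hq1, hq10⟩ := exists_coeff_ne_zero_of_notMem_orderGE hq1
  have hDp1 : D p1 ∈ orderGE k 0 := orderGE_antitone (by lia) (hD hp1)
  have hp1 : p1 ∈ orderGE k (-n) := by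
    have hg : 2 * q1 - w ∈ orderGE k n :=
      sub_mem (ofNat_mul_mem_orderGE 2 hq1) (orderGE_antitone hn.le hw)
    have hgp : (2 * q1 - w) * p1 ∈ orderGE k 0 := by
      rw [mul_comm, ← sub_eq_iff_eq_add.mpr h.p1_eq]
      exact sub_mem hDp1 (algebraMap_mem_orderGE a0 le_rfl)
    simpa using mem_orderGE_of_mul_mem hg (by simpa [hw n hn] using hq10) hgp
  have hq1q1 : q1 * q1 - T * (4 * p2) ∈ orderGE k (2 * n + 1) := by
    rw [show q1 * q1 - T * (4 * p2) = q1 * w - D q1 - T by linear_combination h.q1_eq]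
    exact sub_mem (sub_mem (mul_mem_orderGE hq1 hw) (orderGE_antitone (by lia) (hD hq1)))
      (orderGE_antitone (by lia) hT)
  have hTp2 : T * (4 * p2) ∈ orderGE k (2 * n) := by
    simpa using sub_mem (mul_mem_orderGE (l := 2 * n) hq1 hq1)
      (orderGE_antitone (by lia) hq1q1)
  have hp2 : 4 * p2 ∈ orderGE k (2 * n - τ) := mem_orderGE_of_mul_mem hT hT0 hTp2
  have hp20 : (4 * p2).coeff (2 * n - τ) ≠ 0 := by
    have hcoeff := hq1q1 (2 * n) (by lia)
    rw [HahnSeries.coeff_sub, coeff_mul_of_mem_orderGE hq1 hq1, coeff_mul_of_mem_orderGE hT hp2,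
      sub_eq_zero] at hcoeff
    exact right_ne_zero_of_mul (hcoeff ▸ mul_self_ne_zero.mpr hq10)
  have hq2 : q2 ∈ orderGE k (-d - (2 * n - τ)) := by
    refine mem_orderGE_of_mul_mem hp2 hp20 ?_
    rw [show 4 * p2 * q2 = 2 * (w - algebraMap k k⸨X⸩ (a0 + a1 + a3) - 2 * (q1 * p1)) by
      linear_combination -2 * h.w_eq]
    exact ofNat_mul_mem_orderGE 2 (sub_mem (sub_mem hw (algebraMap_mem_orderGE _))
      (ofNat_mul_mem_orderGE 2 (mul_mem_orderGE hq1 hp1)))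
  refine hT0 ((?_ : T ∈ orderGE k (τ + 1)) τ (by lia))
  rw [show T = T * (4 * p1) + q2 * (w - q2) - D q2 by linear_combination h.q2_eq]
  exact sub_mem (add_mem (mul_mem_orderGE hT (ofNat_mul_mem_orderGE 4 hp1))
    (mul_mem_orderGE hq2 (sub_mem hw ‹q2 ∈ orderGE k (-d)›))) (orderGE_antitone (by lia) (hD hq2))

theorem q1_mem_orderGE (hd : 0 ≤ d) (hD : LowersOrder D d)
    (hT : T ∈ orderGE k τ) (hT0 : T.coeff τ ≠ 0) (hτ : -2 * d - 1 ≤ τ)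
    (h : IsSolution D T a0 a1 a3 q1 p1 q2 p2 w) : q1 ∈ orderGE k (-d) := by
  have hT' := orderGE_antitone hτ hT
  have hw := h.w_mem_orderGE hd hD hT'
  by_cases hp1 : p1 ∈ orderGE k (d + 1)
  swap
  · exact mem_orderGE_of_two_mul_sub_mem hw (mem_orderGE_of_deriv_eq_mul_add hD hp1 h.p1_eq)
  by_cases hp2 : p2 ∈ orderGE k 0
  · exact mem_orderGE_of_riccati hD hw (mul_mem_orderGE hT'
      (sub_mem (one_mem_orderGE le_rfl) (ofNat_mul_mem_orderGE 4 hp2))) h.q1_eq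
  refine h.q1_mem_orderGE_of_q2_mem hd hD hT hT0 hτ hw hp1 ?_
  exact mem_orderGE_of_two_mul_sub_mem hw (mem_orderGE_of_deriv_eq_mul_add hD
    (mt (orderGE_antitone (by lia) ·) hp2) h.p2_eq)

end IsSolution

end OrderBounds

section EulerDerivation

variable {R : Type*} [CommRing R] {f : R⸨X⸩} {n : ℤ}

variable (R) in
/-- The operator `X d/dX` on `R⸨X⸩` as a linear map, from which `eulerDeriv` is built. -/
def eulerLinearMap : R⸨X⸩ →ₗ[R] R⸨X⸩ where
  toFun f :=
    { coeff n := n * f.coeff n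
      isPWO_support' := f.isPWO_support.mono fun _ => right_ne_zero_of_mul }
  map_add' f g := by ext n; simp [mul_add]
  map_smul' a f := by ext n; simp [mul_left_comm]

lemma coeff_eulerLinearMap (f : R⸨X⸩) (n : ℤ) :
    (eulerLinearMap R f).coeff n = n * f.coeff n := rfl

lemma support_eulerLinearMap_subset (f : R⸨X⸩) : (eulerLinearMap R f).support ⊆ f.support :=
  fun _ => right_ne_zero_of_mul

variable (R) in
/-- The Euler derivation `X d/dX` of `R⸨X⸩`. -/
def eulerDeriv : Derivation R R⸨X⸩ R⸨X⸩ :=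
  .mk' (eulerLinearMap R) fun f g => by
    ext n
    rw [smul_eq_mul, smul_eq_mul, mul_comm g, HahnSeries.coeff_add,
      HahnSeries.coeff_mul_right' g.isPWO_support (support_eulerLinearMap_subset g),
      HahnSeries.coeff_mul_left' f.isPWO_support (support_eulerLinearMap_subset f),
      ← Finset.sum_add_distrib, coeff_eulerLinearMap, HahnSeries.coeff_mul, Finset.mul_sum]
    refine Finset.sum_congr rfl fun ij hij => ?_
    obtain ⟨-, -, rfl⟩ := Finset.mem_antidiagonal.mp hij
    rw [coeff_eulerLinearMap, coeff_eulerLinearMap, Int.cast_add]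
    ring

@[simp]
lemma coeff_eulerDeriv (f : R⸨X⸩) (n : ℤ) : (eulerDeriv R f).coeff n = n * f.coeff n := rfl

variable (R) in
/-- The derivation `(1 + X⁻¹) X d/dX` of `R⸨X⸩`: in the coordinate `t = c (1 + X)` centred at
`c ≠ 0` it is `t d/dt`. -/
def shiftedEulerDeriv : Derivation R R⸨X⸩ R⸨X⸩ :=
  (1 + HahnSeries.single (-1) 1 : R⸨X⸩) • eulerDeriv R

@[simp]
lemma coeff_shiftedEulerDeriv (f : R⸨X⸩) (n : ℤ) :
    (shiftedEulerDeriv R f).coeff n = n * f.coeff n + (n + 1) * f.coeff (n + 1) := by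
  simp [shiftedEulerDeriv, add_mul, HahnSeries.coeff_single_mul]

end EulerDerivation

section LeadingCoefficients

variable {k : Type*} [Field k]
  {T q1 p1 q2 p2 w : k⸨X⸩} {a0 a1 a3 : k} {n : ℤ}

lemma lowersOrder_eulerDeriv : LowersOrder (eulerDeriv k) 0 := fun _ _ hf m hm => by
  simp [hf m (by lia)]

lemma lowersOrder_neg_eulerDeriv : LowersOrder (-eulerDeriv k) 0 :=
  fun _ _ hf => neg_mem (lowersOrder_eulerDeriv hf)

lemma lowersOrder_shiftedEulerDeriv : LowersOrder (shiftedEulerDeriv k) 1 := fun _ _ hf m hm => by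
  simp [hf m (by lia), hf (m + 1) (by lia)]

variable [CharZero k]

namespace IsSolution

theorem q1_mem_orderGE_zero (hT : T ∈ orderGE k 1) (hT0 : T.coeff 1 ≠ 0)
    (h : IsSolution (eulerDeriv k) T a0 a1 a3 q1 p1 q2 p2 w) : q1 ∈ orderGE k 0 :=
  h.q1_mem_orderGE le_rfl lowersOrder_eulerDeriv hT hT0 (by simp)

section Infinity

variable (hT : T ∈ orderGE k (-1)) (hT0 : T.coeff (-1) ≠ 0)
  (h : IsSolution (-eulerDeriv k) T a0 a1 a3 q1 p1 q2 p2 w)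

include hT h

lemma w_mem_orderGE_zero_of_infinity : w ∈ orderGE k 0 :=
  h.w_mem_orderGE le_rfl lowersOrder_neg_eulerDeriv hT

include hT0

theorem q1_mem_orderGE_zero_of_infinity : q1 ∈ orderGE k 0 :=
  h.q1_mem_orderGE le_rfl lowersOrder_neg_eulerDeriv hT hT0 le_rfl

lemma one_sub_four_mul_p2_mem_orderGE : 1 - 4 * p2 ∈ orderGE k 1 := by
  have hq := h.q1_mem_orderGE_zero_of_infinity hT hT0
  refine mem_orderGE_of_mul_mem (l := 0) hT hT0 ?_
  rw [show T * (1 - 4 * p2) = q1 * (w - q1) - (-eulerDeriv k) q1 by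
    linear_combination h.q1_eq]
  exact sub_mem (mul_mem_orderGE hq (sub_mem (h.w_mem_orderGE_zero_of_infinity hT) hq))
    (lowersOrder_neg_eulerDeriv hq)

lemma p2_mem_orderGE_zero_of_infinity : p2 ∈ orderGE k 0 := by
  have hp2 := orderGE_antitone zero_le_one (h.one_sub_four_mul_p2_mem_orderGE hT hT0)
  exact mem_orderGE_of_ofNat_mul_mem 4 (by simpa using sub_mem (one_mem_orderGE le_rfl) hp2)

lemma coeff_p2_of_infinity : p2.coeff 0 = 1 / 4 := by
  have hp2 := h.one_sub_four_mul_p2_mem_orderGE hT hT0 0 zero_lt_one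
  simp at hp2
  linear_combination -hp2 / 4

lemma two_mul_coeff_q2_sub_coeff_w : 2 * q2.coeff 0 - w.coeff 0 = -4 * a1 := by
  have hg : 2 * q2 - w ∈ orderGE k 0 :=
    sub_mem (ofNat_mul_mem_orderGE 2 (h.swap.q1_mem_orderGE_zero_of_infinity hT hT0))
      (h.w_mem_orderGE_zero_of_infinity hT)
  have hE := congrArg (HahnSeries.coeff · 0) h.p2_eq
  simp [coeff_mul_of_mem_orderGE (h.p2_mem_orderGE_zero_of_infinity hT hT0) hg (add_zero 0),
    h.coeff_p2_of_infinity hT hT0] at hE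
  linear_combination -4 * hE

theorem coeff_q1_of_infinity : q1.coeff 0 = -2 * a0 + a3 := by
  have hw := congrArg (HahnSeries.coeff · 0) h.w_eq
  simp [coeff_mul_of_mem_orderGE (h.q1_mem_orderGE_zero_of_infinity hT hT0)
      (h.swap.p2_mem_orderGE_zero_of_infinity hT hT0) (add_zero 0),
    coeff_mul_of_mem_orderGE (h.swap.q1_mem_orderGE_zero_of_infinity hT hT0)
      (h.p2_mem_orderGE_zero_of_infinity hT hT0) (add_zero 0), h.coeff_p2_of_infinity hT hT0,
    h.swap.coeff_p2_of_infinity hT hT0] at hw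
  linear_combination hw + 3 / 4 * h.swap.two_mul_coeff_q2_sub_coeff_w hT hT0
    + 1 / 4 * h.two_mul_coeff_q2_sub_coeff_w hT hT0

end Infinity

section FinitePoint

variable (hT : T ∈ orderGE k 0) (hT0 : T.coeff 0 ≠ 0)
  (h : IsSolution (shiftedEulerDeriv k) T a0 a1 a3 q1 p1 q2 p2 w)

include hT h

lemma w_mem_orderGE_neg_one : w ∈ orderGE k (-1) :=
  h.w_mem_orderGE zero_le_one lowersOrder_shiftedEulerDeriv (orderGE_antitone (by lia) hT)

include hT0

theorem q1_mem_orderGE_neg_one : q1 ∈ orderGE k (-1) :=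
  h.q1_mem_orderGE zero_le_one lowersOrder_shiftedEulerDeriv hT hT0 (by lia)

lemma p2_mem_orderGE_neg_two : p2 ∈ orderGE k (-2) := by
  have hq := h.q1_mem_orderGE_neg_one hT hT0
  have hTp : T * (1 - 4 * p2) ∈ orderGE k (-2) := by
    rw [show T * (1 - 4 * p2) = q1 * (w - q1) - shiftedEulerDeriv k q1 by
      linear_combination h.q1_eq]
    exact sub_mem (mul_mem_orderGE hq (sub_mem (h.w_mem_orderGE_neg_one hT) hq))
      (lowersOrder_shiftedEulerDeriv hq)
  have hp : 1 - 4 * p2 ∈ orderGE k (-2) := mem_orderGE_of_mul_mem hT hT0 hTp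
  exact mem_orderGE_of_ofNat_mul_mem 4 (by simpa using sub_mem one_mem_orderGE hp)

lemma residue_q1_eq : q1.coeff (-1) * (q1.coeff (-1) - w.coeff (-1) - 1)
    = 4 * T.coeff 0 * p2.coeff (-2) := by
  have hq := h.q1_mem_orderGE_neg_one hT hT0
  have hp : 1 - 4 * p2 ∈ orderGE k (-2) :=
    sub_mem one_mem_orderGE (ofNat_mul_mem_orderGE 4 (h.p2_mem_orderGE_neg_two hT hT0))
  have hE := congrArg (HahnSeries.coeff · (-2)) h.q1_eq
  simp [hq (-2) (by lia), coeff_mul_of_mem_orderGE hq (sub_mem (h.w_mem_orderGE_neg_one hT) hq)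
    (l := -2), coeff_mul_of_mem_orderGE hT hp (l := -2), HahnSeries.coeff_one] at hE
  linear_combination hE

lemma coeff_p1_mul_eq_zero (hp1 : p1 ∈ orderGE k n) (hn : n ≠ 1) :
    p1.coeff n * (2 * q1.coeff (-1) - w.coeff (-1) - n) = 0 := by
  have hg : 2 * q1 - w ∈ orderGE k (-1) :=
    sub_mem (ofNat_mul_mem_orderGE 2 (h.q1_mem_orderGE_neg_one hT hT0))
      (h.w_mem_orderGE_neg_one hT)
  have hE := congrArg (HahnSeries.coeff · (n - 1)) h.p1_eq
  simp [hp1 (n - 1) (by lia), coeff_mul_of_mem_orderGE hp1 hg (l := n - 1), sub_eq_zero, hn] at hE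
  linear_combination -hE

omit hT0 in
lemma coeff_p1_add_p2_sub_one_mul_eq_zero (hf : p1 + p2 - 1 ∈ orderGE k n) (hn : n ≠ 1) :
    (p1 + p2 - 1).coeff n * (w.coeff (-1) + n) = 0 := by
  have hE := congrArg (HahnSeries.coeff · (n - 1)) h.deriv_add_sub_one
  generalize p1 + p2 - 1 = f at hf hE ⊢
  simp [hf (n - 1) (by lia), coeff_mul_of_mem_orderGE hf (h.w_mem_orderGE_neg_one hT)
    (l := n - 1), sub_eq_zero, hn] at hE
  linear_combination hE

lemma exists_int_residue_w_eq_of_p1_notMem (hp1 : p1 ∉ orderGE k 1) (hp2 : p2 ∈ orderGE k (-1)) :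
    ∃ m : ℤ, w.coeff (-1) = m := by
  obtain ⟨n, hn, hp1, hp10⟩ := exists_coeff_ne_zero_of_notMem_orderGE hp1
  have hr := (mul_eq_zero_iff_left hp10).mp (h.coeff_p1_mul_eq_zero hT hT0 hp1 hn.ne)
  have hr1 := h.residue_q1_eq hT hT0
  rw [hp2 (-2) (by lia), mul_zero, mul_eq_zero] at hr1
  rcases hr1 with h0 | h1
  · exact ⟨-n, by push_cast; linear_combination 2 * h0 - hr⟩
  · exact ⟨n - 2, by push_cast; linear_combination hr - 2 * h1⟩

lemma exists_int_residue_w_eq_of_p_mem (hp1 : p1 ∈ orderGE k (-1)) (hp2 : p2 ∈ orderGE k (-1)) :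
    ∃ m : ℤ, w.coeff (-1) = m := by
  by_cases hp1' : p1 ∈ orderGE k 1
  swap
  · exact h.exists_int_residue_w_eq_of_p1_notMem hT hT0 hp1' hp2
  by_cases hp2' : p2 ∈ orderGE k 1
  swap
  · exact h.swap.exists_int_residue_w_eq_of_p1_notMem hT hT0 hp2' hp1
  have hf : p1 + p2 - 1 ∈ orderGE k 0 := sub_mem (orderGE_antitone zero_le_one
    (add_mem hp1' hp2')) (one_mem_orderGE le_rfl)
  have hω := h.coeff_p1_add_p2_sub_one_mul_eq_zero hT hf zero_ne_one
  exact ⟨0, by simpa [hp1' 0 zero_lt_one, hp2' 0 zero_lt_one] using hω⟩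

lemma exists_int_residue_q1_eq_of_p_mem (hp1 : p1 ∈ orderGE k (-1)) (hp2 : p2 ∈ orderGE k (-1)) :
    ∃ m : ℤ, q1.coeff (-1) = m := by
  obtain ⟨m, hm⟩ := h.exists_int_residue_w_eq_of_p_mem hT hT0 hp1 hp2
  have hr1 := h.residue_q1_eq hT hT0
  rw [hp2 (-2) (by lia), mul_zero, mul_eq_zero] at hr1
  rcases hr1 with h0 | h1
  · exact ⟨0, by simp [h0]⟩
  · exact ⟨m + 1, by push_cast; linear_combination h1 + hm⟩

lemma residue_w_eq_two (hP : p1.coeff (-2) + p2.coeff (-2) ≠ 0) : w.coeff (-1) = 2 := by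
  have hf : p1 + p2 - 1 ∈ orderGE k (-2) := sub_mem (add_mem
    (h.swap.p2_mem_orderGE_neg_two hT hT0) (h.p2_mem_orderGE_neg_two hT hT0)) one_mem_orderGE
  have hω := h.coeff_p1_add_p2_sub_one_mul_eq_zero hT hf (by lia)
  simp [HahnSeries.coeff_one, hP] at hω
  linear_combination hω

lemma p1_mem_or_p2_mem_orderGE_neg_one : p1 ∈ orderGE k (-1) ∨ p2 ∈ orderGE k (-1) := by
  have hp1 := h.swap.p2_mem_orderGE_neg_two hT hT0
  have hp2 := h.p2_mem_orderGE_neg_two hT hT0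
  by_contra! hP
  have hP1 : p1.coeff (-2) ≠ 0 := mt (mem_orderGE_add_one hp1) hP.1
  have hP2 : p2.coeff (-2) ≠ 0 := mt (mem_orderGE_add_one hp2) hP.2
  have hg1 := (mul_eq_zero_iff_left hP1).mp (h.coeff_p1_mul_eq_zero hT hT0 hp1 (by lia))
  have hg2 := (mul_eq_zero_iff_left hP2).mp (h.swap.coeff_p1_mul_eq_zero hT hT0 hp2 (by lia))
  push_cast at hg1 hg2
  have hr : q1.coeff (-1) = q2.coeff (-1) := by linear_combination (hg1 - hg2) / 2
  have hr1 := h.residue_q1_eq hT hT0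
  have hr2 := h.swap.residue_q1_eq hT hT0
  have hc : 4 * T.coeff 0 ≠ 0 := by simpa using hT0
  have hPP : p1.coeff (-2) = p2.coeff (-2) := by
    rw [← hr, hr1] at hr2
    exact (mul_left_cancel₀ hc hr2).symm
  have hω := h.residue_w_eq_two hT hT0 (by
    rw [hPP, ← two_mul]
    exact mul_ne_zero two_ne_zero hP2)
  have hr0 : q1.coeff (-1) = 0 := by linear_combination (hg1 + hω) / 2
  rw [hr0, zero_mul, eq_comm] at hr1
  exact mul_ne_zero hc hP2 hr1

section MixedPole

variable (hp1 : p1 ∈ orderGE k (-1)) (hP2 : p2.coeff (-2) ≠ 0)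

include hp1 hP2

lemma residue_w_eq_two_of_p1_mem : w.coeff (-1) = 2 :=
  h.residue_w_eq_two hT hT0 (by rwa [hp1 (-2) (by lia), zero_add])

lemma residue_q2_eq_zero_of_p1_mem : q2.coeff (-1) = 0 := by
  have hω := h.residue_w_eq_two_of_p1_mem hT hT0 hp1 hP2
  have hp2 := h.p2_mem_orderGE_neg_two hT hT0
  have hg2 := (mul_eq_zero_iff_left hP2).mp (h.swap.coeff_p1_mul_eq_zero hT hT0 hp2 (by lia))
  push_cast at hg2
  linear_combination (hg2 + hω) / 2

lemma q2_mem_orderGE_zero_of_p1_mem : q2 ∈ orderGE k 0 :=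
  mem_orderGE_add_one (h.swap.q1_mem_orderGE_neg_one hT hT0)
    (h.residue_q2_eq_zero_of_p1_mem hT hT0 hp1 hP2)

lemma coeff_q2_zero_eq : q2.coeff 0 = -2 * T.coeff 0 * p1.coeff (-1) := by
  have hω := h.residue_w_eq_two_of_p1_mem hT hT0 hp1 hP2
  have hq2 := h.q2_mem_orderGE_zero_of_p1_mem hT hT0 hp1 hP2
  have hwq : w - q2 ∈ orderGE k (-1) :=
    sub_mem (h.w_mem_orderGE_neg_one hT) (h.swap.q1_mem_orderGE_neg_one hT hT0)
  have hp : 1 - 4 * p1 ∈ orderGE k (-1) := sub_mem one_mem_orderGE (ofNat_mul_mem_orderGE 4 hp1)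
  have hE := congrArg (HahnSeries.coeff · (-1)) h.q2_eq
  simp [coeff_mul_of_mem_orderGE hq2 hwq (l := -1), coeff_mul_of_mem_orderGE hT hp (l := -1),
    HahnSeries.coeff_one, hω, hq2 (-1) (by lia)] at hE
  linear_combination -hE / 2

lemma p1_mem_orderGE_zero_of_p1_mem : p1 ∈ orderGE k 0 := by
  refine mem_orderGE_add_one hp1 (by_contra fun hκ => ?_)
  have hω := h.residue_w_eq_two_of_p1_mem hT hT0 hp1 hP2
  have hg1 := (mul_eq_zero_iff_left hκ).mp (h.coeff_p1_mul_eq_zero hT hT0 hp1 (by lia))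
  have hr1 := h.residue_q1_eq hT hT0
  have hcP : 2 * T.coeff 0 * p2.coeff (-2) = q1.coeff (-1) := by
    refine mul_left_cancel₀ hκ ?_
    have hE := congrArg (HahnSeries.coeff · (-2)) h.w_eq
    simp [coeff_mul_of_mem_orderGE (h.q1_mem_orderGE_neg_one hT hT0) hp1 (l := -2),
      coeff_mul_of_mem_orderGE (h.q2_mem_orderGE_zero_of_p1_mem hT hT0 hp1 hP2)
        (h.p2_mem_orderGE_neg_two hT hT0) (l := -2), h.w_mem_orderGE_neg_one hT (-2) (by lia),
      h.coeff_q2_zero_eq hT hT0 hp1 hP2] at hE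
    linear_combination hE / 2
  have hr : q1.coeff (-1) = 1 / 2 := by push_cast at hg1; linear_combination (hg1 + hω) / 2
  rw [hω, hr] at hr1
  rw [hr] at hcP
  norm_num at hr1
  have : (9 : k) / 4 = 0 := by linear_combination -2 * hcP - hr1
  norm_num at this

lemma q2_mem_orderGE_one_of_p1_mem : q2 ∈ orderGE k 1 :=
  mem_orderGE_add_one (h.q2_mem_orderGE_zero_of_p1_mem hT hT0 hp1 hP2) (by
    rw [h.coeff_q2_zero_eq hT hT0 hp1 hP2,
      h.p1_mem_orderGE_zero_of_p1_mem hT hT0 hp1 hP2 (-1) (by lia), mul_zero])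

lemma coeff_q2_one_eq : q2.coeff 1 = T.coeff 0 * (1 - 4 * p1.coeff 0) := by
  have hω := h.residue_w_eq_two_of_p1_mem hT hT0 hp1 hP2
  have hp1' := h.p1_mem_orderGE_zero_of_p1_mem hT hT0 hp1 hP2
  have hq2 := h.q2_mem_orderGE_one_of_p1_mem hT hT0 hp1 hP2
  have hwq : w - q2 ∈ orderGE k (-1) :=
    sub_mem (h.w_mem_orderGE_neg_one hT) (orderGE_antitone (by lia) hq2)
  have hp : 1 - 4 * p1 ∈ orderGE k 0 :=
    sub_mem (one_mem_orderGE le_rfl) (ofNat_mul_mem_orderGE 4 hp1')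
  have hE := congrArg (HahnSeries.coeff · 0) h.q2_eq
  simp [coeff_mul_of_mem_orderGE hq2 hwq (l := 0), coeff_mul_of_mem_orderGE hT hp (l := 0),
    hω, hq2 (-1) (by lia)] at hE
  linear_combination -hE

lemma residue_q1_mul_add_mul_eq_one :
    q1.coeff (-1) * p1.coeff 0 + q2.coeff 1 * p2.coeff (-2) = 1 := by
  have hω := h.residue_w_eq_two_of_p1_mem hT hT0 hp1 hP2
  have hE := congrArg (HahnSeries.coeff · (-1)) h.w_eq
  simp [coeff_mul_of_mem_orderGE (h.q1_mem_orderGE_neg_one hT hT0)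
      (h.p1_mem_orderGE_zero_of_p1_mem hT hT0 hp1 hP2) (l := -1),
    coeff_mul_of_mem_orderGE (h.q2_mem_orderGE_one_of_p1_mem hT hT0 hp1 hP2)
      (h.p2_mem_orderGE_neg_two hT hT0) (l := -1), hω] at hE
  linear_combination -hE / 2

lemma residue_q1_eq_of_p1_mem :
    q1.coeff (-1) = 1 ∨ q1.coeff (-1) = 4 ∨ q1.coeff (-1) = -1 := by
  have hω := h.residue_w_eq_two_of_p1_mem hT hT0 hp1 hP2
  have hg1 := h.coeff_p1_mul_eq_zero hT hT0 (h.p1_mem_orderGE_zero_of_p1_mem hT hT0 hp1 hP2)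
    zero_ne_one
  rcases mul_eq_zero.mp hg1 with hb | hr
  swap
  · push_cast at hr
    exact .inl (by linear_combination (hr + hω) / 2)
  have hcP := h.residue_q1_mul_add_mul_eq_one hT hT0 hp1 hP2
  rw [h.coeff_q2_one_eq hT hT0 hp1 hP2, hb] at hcP
  have hr : (q1.coeff (-1) - 4) * (q1.coeff (-1) + 1) = 0 := by
    linear_combination h.residue_q1_eq hT hT0 + q1.coeff (-1) * hω + 4 * hcP
  rw [mul_eq_zero, sub_eq_zero, add_eq_zero_iff_eq_neg] at hr
  exact .inr hr

end MixedPole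

theorem exists_int_residue_q1_eq : ∃ m : ℤ, q1.coeff (-1) = m := by
  by_cases hp1 : p1 ∈ orderGE k (-1) <;> by_cases hp2 : p2 ∈ orderGE k (-1)
  · exact h.exists_int_residue_q1_eq_of_p_mem hT hT0 hp1 hp2
  · have hP2 := mt (mem_orderGE_add_one (h.p2_mem_orderGE_neg_two hT hT0)) hp2
    rcases h.residue_q1_eq_of_p1_mem hT hT0 hp1 hP2 with hr | hr | hr
    exacts [⟨1, by simp [hr]⟩, ⟨4, by simp [hr]⟩, ⟨-1, by simp [hr]⟩]
  · have hP1 := mt (mem_orderGE_add_one (h.swap.p2_mem_orderGE_neg_two hT hT0)) hp1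
    exact ⟨0, by simpa using h.swap.residue_q2_eq_zero_of_p1_mem hT hT0 hp2 hP1⟩
  · exact absurd (h.p1_mem_or_p2_mem_orderGE_neg_one hT hT0) (by simp [hp1, hp2])

end FinitePoint

end IsSolution

end LeadingCoefficients

section Expansion

variable {k L : Type*} [Field k] [Field L] [Algebra k L]

lemma transcendental_of_derivation_apply_ne_zero [CharZero k] (D : Derivation k L L) {x : L}
    (hx : D x ≠ 0) : Transcendental k x := fun hx_alg => by
  have hroot : aeval x (derivative (minpoly k x)) = 0 := by
    have hD := D.map_aeval (minpoly k x) x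
    rw [minpoly.aeval, map_zero, smul_eq_mul, eq_comm] at hD
    exact (mul_eq_zero.mp hD).resolve_right hx
  exact (minpoly.irreducible hx_alg.isIntegral).separable.aeval_derivative_ne_zero
    (minpoly.aeval k x) hroot

/-- The formal derivative of a rational function, by the quotient rule. -/
def ratFuncDeriv (f : RatFunc k) : RatFunc k :=
  algebraMap k[X] (RatFunc k) (derivative f.num * f.denom - f.num * derivative f.denom) /
    algebraMap k[X] (RatFunc k) (f.denom ^ 2)

lemma ratFuncDeriv_mul_denom_sq (f : RatFunc k) :
    ratFuncDeriv f * algebraMap k[X] (RatFunc k) (f.denom ^ 2) =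
      algebraMap k[X] (RatFunc k) (derivative f.num * f.denom - f.num * derivative f.denom) :=
  div_mul_cancel₀ _ (RatFunc.algebraMap_ne_zero (pow_ne_zero 2 f.denom_ne_zero))

/-- Substitution of a transcendental element `x` of a field extension into rational functions. -/
def substitution (x : L) (hx : Transcendental k x) : RatFunc k →ₐ[k] L :=
  RatFunc.liftAlgHom (aeval x) (nonZeroDivisors_le_comap_nonZeroDivisors_of_injective _
    (transcendental_iff_injective.mp hx))

variable {x : L} (hx : Transcendental k x)

@[simp]
lemma substitution_algebraMap (P : k[X]) :
    substitution x hx (algebraMap k[X] (RatFunc k) P) = aeval x P :=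
  RatFunc.liftRingHom_algebraMap _ _ P

@[simp]
lemma substitution_X : substitution x hx RatFunc.X = x := by
  rw [← RatFunc.algebraMap_X, substitution_algebraMap, aeval_X]

lemma substitution_mul_aeval_denom (f : RatFunc k) :
    substitution x hx f * aeval x f.denom = aeval x f.num := by
  rw [← substitution_algebraMap hx, ← substitution_algebraMap hx, ← map_mul]
  congr 1
  exact (eq_div_iff (RatFunc.algebraMap_ne_zero f.denom_ne_zero)).mp f.num_div_denom.symm

lemma derivation_substitution (D : Derivation k L L) (f : RatFunc k) :
    D (substitution x hx f) = substitution x hx (ratFuncDeriv f) * D x := by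
  have hden : aeval x f.denom ≠ 0 :=
    (map_ne_zero_iff _ (transcendental_iff_injective.mp hx)).mpr f.denom_ne_zero
  have hf := substitution_mul_aeval_denom hx f
  have hDf := congrArg D hf
  have hderiv := congrArg (substitution x hx) (ratFuncDeriv_mul_denom_sq f)
  simp only [Derivation.leibniz, Derivation.map_aeval, smul_eq_mul] at hDf
  simp only [map_mul, map_sub, map_pow, substitution_algebraMap] at hderiv
  refine mul_right_cancel₀ (pow_ne_zero 2 hden) ?_
  linear_combination aeval x f.denom * hDf - D x * hderiv
    - D x * aeval x (derivative f.denom) * hf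

lemma derivation_substitution_of_apply_eq_self {D : Derivation k L L} (hD : D x = x)
    (f : RatFunc k) :
    D (substitution x hx f) = substitution x hx (RatFunc.X * ratFuncDeriv f) := by
  rw [derivation_substitution, hD, map_mul, substitution_X, mul_comm]

end Expansion

section Places

variable {k : Type*} [Field k] {x : k⸨X⸩}

lemma aeval_mem_orderGE_zero (hx : x ∈ orderGE k 0) (P : k[X]) : aeval x P ∈ orderGE k 0 := by
  induction P using Polynomial.induction_on' with
  | add P Q hP hQ => simpa using add_mem hP hQ
  | monomial n a =>
    induction n with
    | zero => simpa using algebraMap_mem_orderGE (R := k) (n := 0) a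
    | succ n ih =>
      rw [← monomial_mul_X, map_mul, aeval_X]
      exact mul_mem_orderGE ih hx

lemma coeff_zero_aeval (hx : x ∈ orderGE k 0) (P : k[X]) :
    (aeval x P).coeff 0 = P.eval (x.coeff 0) := by
  induction P using Polynomial.induction_on' with
  | add P Q hP hQ => simp [hP, hQ]
  | monomial n a =>
    induction n with
    | zero => simp
    | succ n ih =>
      rw [← monomial_mul_X, map_mul, aeval_X,
        coeff_mul_of_mem_orderGE (aeval_mem_orderGE_zero hx _) hx, ih, eval_mul, eval_X]

lemma coeff_aeval_single_neg_one (P : k[X]) (n : ℕ) :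
    (aeval (HahnSeries.single (-1) 1 : k⸨X⸩) P).coeff (-n) = P.coeff n := by
  induction P using Polynomial.induction_on' with
  | add P Q hP hQ => simp [hP, hQ]
  | monomial m a =>
    rw [aeval_monomial, HahnSeries.single_pow, ← Algebra.smul_def]
    simp [HahnSeries.coeff_single, coeff_monomial, eq_comm]

variable (hx : Transcendental k x)

lemma substitution_mem_orderGE_zero (hx0 : x ∈ orderGE k 0) {f : RatFunc k}
    (hf : f.denom.eval (x.coeff 0) ≠ 0) : substitution x hx f ∈ orderGE k 0 := by
  refine sub_zero (0 : ℤ) ▸ mem_orderGE_of_mul_mem (aeval_mem_orderGE_zero hx0 f.denom)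
    (by rwa [coeff_zero_aeval hx0]) ?_
  rw [mul_comm, substitution_mul_aeval_denom]
  exact aeval_mem_orderGE_zero hx0 f.num

lemma coeff_zero_substitution_mul_eval_denom (hx0 : x ∈ orderGE k 0) {f : RatFunc k}
    (hf : substitution x hx f ∈ orderGE k 0) :
    (substitution x hx f).coeff 0 * f.denom.eval (x.coeff 0) = f.num.eval (x.coeff 0) := by
  rw [← coeff_zero_aeval hx0, ← coeff_zero_aeval hx0, ← substitution_mul_aeval_denom hx,
    coeff_mul_of_mem_orderGE hf (aeval_mem_orderGE_zero hx0 _)]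

lemma eval_denom_ne_zero_of_substitution_mem (hx0 : x ∈ orderGE k 0) {f : RatFunc k}
    (hf : substitution x hx f ∈ orderGE k 0) : f.denom.eval (x.coeff 0) ≠ 0 := fun hden => by
  have hnum := coeff_zero_substitution_mul_eval_denom hx hx0 hf
  rw [hden, mul_zero] at hnum
  obtain ⟨a, b, hab⟩ := f.isCoprime_num_denom
  simpa [hden, ← hnum] using congrArg (eval (x.coeff 0)) hab

end Places

section ResidueTheorem

variable {k : Type*} [Field k] {x : k⸨X⸩} {c : k} {f : RatFunc k}

lemma eulerDeriv_single_one :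
    eulerDeriv k (HahnSeries.single 1 1) = HahnSeries.single 1 1 := by
  ext n
  by_cases hn : n = 1 <;> simp [hn]

lemma neg_eulerDeriv_single_neg_one :
    (-eulerDeriv k) (HahnSeries.single (-1) 1) = HahnSeries.single (-1) 1 := by
  ext n
  by_cases hn : n = -1 <;> simp [hn]

/-- The Laurent expansion `t = c (1 + X)` of the independent variable at a point `c ≠ 0`. The
parameter is `X = (t - c) / c` rather than `t - c`, so that coefficients of `X⁻¹` are residues with
respect to `dt / t`. -/
def localVariable (c : k) : k⸨X⸩ := algebraMap k k⸨X⸩ c * (1 + HahnSeries.single 1 1)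

lemma coeff_localVariable (c : k) (n : ℤ) :
    (localVariable c).coeff n = if n = 0 ∨ n = 1 then c else 0 := by
  rw [localVariable, ← Algebra.smul_def]
  rcases eq_or_ne n 0 with rfl | h0
  · simp
  rcases eq_or_ne n 1 with rfl | h1 <;> simp [*]

lemma localVariable_mem_orderGE (c : k) : localVariable c ∈ orderGE k 0 := fun m hm => by
  rw [coeff_localVariable, if_neg (by lia)]

lemma localVariable_ne_zero (hc : c ≠ 0) : localVariable c ≠ 0 := fun h => by
  simpa [coeff_localVariable, hc] using congrArg (HahnSeries.coeff · 0) h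

lemma shiftedEulerDeriv_localVariable (c : k) :
    shiftedEulerDeriv k (localVariable c) = localVariable c := by
  ext n
  simp only [coeff_shiftedEulerDeriv, coeff_localVariable]
  rcases eq_or_ne n 0 with rfl | h0
  · simp
  rcases eq_or_ne n 1 with rfl | h1
  · simp
  rcases eq_or_ne n (-1) with rfl | h2
  · simp
  · simp [h0, h1, show n + 1 ≠ 0 by lia]

/-- The simple fraction `c / (t - c)`, whose residue at `c` with respect to `dt / t` is `1`. -/
def simpleFraction (c : k) : RatFunc k :=
  algebraMap k[X] (RatFunc k) (C c) / algebraMap k[X] (RatFunc k) (X - C c)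

lemma sub_mul_substitution_simpleFraction (hx : Transcendental k x) (c : k) :
    (x - algebraMap k k⸨X⸩ c) * substitution x hx (simpleFraction c) = algebraMap k k⸨X⸩ c := by
  have h := congrArg (substitution x hx) (div_mul_cancel₀
    (algebraMap k[X] (RatFunc k) (C c)) (RatFunc.algebraMap_ne_zero (X_sub_C_ne_zero c)))
  rwa [map_mul, substitution_algebraMap, substitution_algebraMap, aeval_sub, aeval_X, aeval_C,
    mul_comm] at h

lemma substitution_simpleFraction_mem_orderGE (hx : Transcendental k x) (hx0 : x ∈ orderGE k 0)
    (hc : x.coeff 0 ≠ c) : substitution x hx (simpleFraction c) ∈ orderGE k 0 := by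
  refine sub_zero (0 : ℤ) ▸ mem_orderGE_of_mul_mem
    (sub_mem hx0 (algebraMap_mem_orderGE c)) (by simpa [sub_eq_zero] using hc) ?_
  rw [sub_mul_substitution_simpleFraction]
  exact algebraMap_mem_orderGE c

lemma coeff_zero_substitution_simpleFraction (hx : Transcendental k x) (hx0 : x ∈ orderGE k 0)
    (hc : x.coeff 0 ≠ c) :
    (substitution x hx (simpleFraction c)).coeff 0 = c / (x.coeff 0 - c) := by
  have hcoeff := HahnSeries.ext_iff.mp (sub_mul_substitution_simpleFraction hx c)
  have hcoeff := congrFun hcoeff 0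
  rw [coeff_mul_of_mem_orderGE (sub_mem hx0 (algebraMap_mem_orderGE c))
    (substitution_simpleFraction_mem_orderGE hx hx0 hc)] at hcoeff
  rw [eq_div_iff (sub_ne_zero.mpr hc), mul_comm]
  simpa using hcoeff

variable [CharZero k]

lemma transcendental_of_derivation_apply_eq_self {D : Derivation k k⸨X⸩ k⸨X⸩} (hD : D x = x)
    (hx : x ≠ 0) : Transcendental k x :=
  transcendental_of_derivation_apply_ne_zero D (hD.symm ▸ hx)

/-- Laurent expansion at `0`, in the parameter `X = t`. -/
def expandZero : RatFunc k →ₐ[k] k⸨X⸩ :=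
  substitution (HahnSeries.single 1 1)
    (transcendental_of_derivation_apply_eq_self eulerDeriv_single_one (by simp))

/-- Laurent expansion at a point `c ≠ 0`, in the parameter `X = (t - c) / c`. -/
def expandAt (hc : c ≠ 0) : RatFunc k →ₐ[k] k⸨X⸩ :=
  substitution (localVariable c) (transcendental_of_derivation_apply_eq_self
    (shiftedEulerDeriv_localVariable c) (localVariable_ne_zero hc))

/-- Laurent expansion at infinity, in the parameter `X = t⁻¹`. -/
def expandInfty : RatFunc k →ₐ[k] k⸨X⸩ :=
  substitution (HahnSeries.single (-1) 1)
    (transcendental_of_derivation_apply_eq_self neg_eulerDeriv_single_neg_one (by simp))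

lemma expandAt_simpleFraction_self (hc : c ≠ 0) :
    expandAt hc (simpleFraction c) = HahnSeries.single (-1) 1 := by
  have hmul : (localVariable c - algebraMap k k⸨X⸩ c) * expandAt hc (simpleFraction c) =
    algebraMap k k⸨X⸩ c := sub_mul_substitution_simpleFraction _ c
  have hc' : algebraMap k k⸨X⸩ c ≠ 0 := (_root_.map_ne_zero _).mpr hc
  have hX : (HahnSeries.single (-1) 1 * HahnSeries.single 1 1 : k⸨X⸩) = 1 := by
    simp [HahnSeries.single_mul_single]
  rw [localVariable] at hmul
  refine mul_left_cancel₀ hc' ?_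
  linear_combination HahnSeries.single (-1) 1 * hmul
    - algebraMap k k⸨X⸩ c * expandAt hc (simpleFraction c) * hX

lemma expandInfty_simpleFraction_mem_orderGE (c : k) :
    expandInfty (simpleFraction c) ∈ orderGE k 1 := by
  refine mem_orderGE_of_mul_mem (l := 0) (m := -1)
    (sub_mem (single_mem_orderGE (-1) 1) (algebraMap_mem_orderGE c)) (by simp) ?_
  rw [expandInfty, sub_mul_substitution_simpleFraction]
  exact algebraMap_mem_orderGE c

lemma eval_denom_zero_ne_zero (h0 : expandZero f ∈ orderGE k 0) : f.denom.eval 0 ≠ 0 := by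
  simpa using eval_denom_ne_zero_of_substitution_mem _
    (orderGE_antitone zero_le_one (single_mem_orderGE 1 1)) h0

lemma ne_zero_of_mem_roots_denom (h0 : expandZero f ∈ orderGE k 0) (hc : c ∈ f.denom.roots) :
    c ≠ 0 := by
  rintro rfl
  exact eval_denom_zero_ne_zero h0 (isRoot_of_mem_roots hc)

lemma exists_eq_algebraMap_of_regular [IsAlgClosed k] (h0 : expandZero f ∈ orderGE k 0)
    (hfin : ∀ c (hc : c ≠ 0), expandAt hc f ∈ orderGE k 0) (hinf : expandInfty f ∈ orderGE k 0) :
    ∃ a, f = algebraMap k (RatFunc k) a := by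
  have hroot (c : k) : f.denom.eval c ≠ 0 := by
    rcases eq_or_ne c 0 with rfl | hc
    · exact eval_denom_zero_ne_zero h0
    · simpa [coeff_localVariable] using
        eval_denom_ne_zero_of_substitution_mem _ (localVariable_mem_orderGE c) (hfin c hc)
  have hdenom : f.denom = 1 := f.monic_denom.natDegree_eq_zero.mp <|
    natDegree_eq_zero_iff_degree_le_zero.mpr <| le_of_not_gt fun hdeg =>
      (IsAlgClosed.exists_root f.denom hdeg.ne').elim hroot
  have hf : f = algebraMap k[X] (RatFunc k) f.num := by
    simpa [hdenom] using f.num_div_denom.symm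
  have hnum : f.num = C (f.num.coeff 0) := by
    refine eq_C_of_natDegree_eq_zero (natDegree_eq_zero_iff_degree_le_zero.mpr ?_)
    refine (degree_le_iff_coeff_zero _ _).mpr fun n hn => ?_
    rw [hf, expandInfty, substitution_algebraMap] at hinf
    simpa [← coeff_aeval_single_neg_one] using hinf (-n) (by simpa using hn)
  exact ⟨f.num.coeff 0, by rw [hf, hnum]; simp⟩

lemma expandZero_simpleFraction_mem_orderGE (hc : c ≠ 0) :
    expandZero (simpleFraction c) ∈ orderGE k 0 :=
  substitution_simpleFraction_mem_orderGE _
    (orderGE_antitone zero_le_one (single_mem_orderGE 1 1)) (by simpa using hc.symm)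

lemma coeff_zero_expandZero_simpleFraction (hc : c ≠ 0) :
    (expandZero (simpleFraction c)).coeff 0 = -1 := by
  rw [expandZero, coeff_zero_substitution_simpleFraction _
    (orderGE_antitone zero_le_one (single_mem_orderGE 1 1)) (by simpa using hc.symm)]
  simp [hc]

lemma expandAt_simpleFraction_mem_orderGE {c' : k} (hc : c ≠ 0) (h : c ≠ c') :
    expandAt hc (simpleFraction c') ∈ orderGE k 0 :=
  substitution_simpleFraction_mem_orderGE _ (localVariable_mem_orderGE c)
    (by simpa [coeff_localVariable] using h)

lemma expandAt_mem_orderGE_zero (hc : c ≠ 0) (hf : f.denom.eval c ≠ 0) :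
    expandAt hc f ∈ orderGE k 0 :=
  substitution_mem_orderGE_zero _ (localVariable_mem_orderGE c)
    (by simpa [coeff_localVariable] using hf)

lemma exists_eq_algebraMap_add_sum_simpleFraction [IsAlgClosed k] [DecidableEq k] {r : k → k}
    (h0 : expandZero f ∈ orderGE k 0)
    (hfin : ∀ c (hc : c ≠ 0), expandAt hc f - r c • HahnSeries.single (-1) 1 ∈ orderGE k 0)
    (hinf : expandInfty f ∈ orderGE k 0) :
    ∃ a, f = algebraMap k (RatFunc k) a + ∑ c ∈ f.denom.roots.toFinset, r c • simpleFraction c := by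
  set S := f.denom.roots.toFinset
  simp only [← sub_eq_iff_eq_add]
  apply exists_eq_algebraMap_of_regular
  all_goals simp only [map_sub, map_sum, map_smul]
  · exact sub_mem h0 (sum_mem fun c hc =>
      Submodule.smul_mem _ _ (expandZero_simpleFraction_mem_orderGE
        (ne_zero_of_mem_roots_denom h0 (Multiset.mem_toFinset.mp hc))))
  · intro c hc
    by_cases hcS : c ∈ S
    · rw [← Finset.add_sum_erase S _ hcS, expandAt_simpleFraction_self, ← sub_sub]
      exact sub_mem (hfin c hc) (sum_mem fun c' hc' => Submodule.smul_mem _ _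
        (expandAt_simpleFraction_mem_orderGE hc (Finset.ne_of_mem_erase hc').symm))
    · exact sub_mem (expandAt_mem_orderGE_zero hc (by simpa [S, f.denom_ne_zero] using hcS))
        (sum_mem fun c' hc' => Submodule.smul_mem _ _
          (expandAt_simpleFraction_mem_orderGE hc (ne_of_mem_of_not_mem hc' hcS).symm))
  · exact sub_mem hinf (sum_mem fun c _ => Submodule.smul_mem _ _
      (orderGE_antitone zero_le_one (expandInfty_simpleFraction_mem_orderGE c)))

/-- The residue theorem for `f dt / t`, when `f` has only simple poles away from `0` and `∞`. -/
theorem coeff_zero_expandInfty_sub_coeff_zero_expandZero [IsAlgClosed k] [DecidableEq k]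
    {r : k → k} (h0 : expandZero f ∈ orderGE k 0)
    (hfin : ∀ c (hc : c ≠ 0), expandAt hc f - r c • HahnSeries.single (-1) 1 ∈ orderGE k 0)
    (hinf : expandInfty f ∈ orderGE k 0) :
    (expandInfty f).coeff 0 - (expandZero f).coeff 0 = ∑ c ∈ f.denom.roots.toFinset, r c := by
  obtain ⟨a, hf⟩ := exists_eq_algebraMap_add_sum_simpleFraction h0 hfin hinf
  have hzero : (expandZero f).coeff 0 = a - ∑ c ∈ f.denom.roots.toFinset, r c := by
    conv_lhs => rw [hf]
    simp only [map_add, map_sum, map_smul, AlgHom.commutes, HahnSeries.coeff_add, coeff_algebraMap,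
      HahnSeries.coeff_sum, HahnSeries.coeff_smul, if_true]
    rw [Finset.sum_congr rfl fun c hc => by
      rw [coeff_zero_expandZero_simpleFraction
        (ne_zero_of_mem_roots_denom h0 (Multiset.mem_toFinset.mp hc)), smul_eq_mul, mul_neg_one],
      Finset.sum_neg_distrib, sub_eq_add_neg]
  have hinfty : (expandInfty f).coeff 0 = a := by
    conv_lhs => rw [hf]
    simp only [map_add, map_sum, map_smul, AlgHom.commutes, HahnSeries.coeff_add, coeff_algebraMap,
      HahnSeries.coeff_sum, HahnSeries.coeff_smul, if_true,
      expandInfty_simpleFraction_mem_orderGE _ 0 zero_lt_one, smul_zero, Finset.sum_const_zero,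
      add_zero]
  rw [hzero, hinfty, sub_sub_cancel]

end ResidueTheorem

section RationalSolutions

variable {k : Type*} [Field k] {a0 a1 a3 : k} {q1 p1 q2 p2 w : RatFunc k}

lemma IsSolution.map_substitution {D : Derivation k k⸨X⸩ k⸨X⸩} {x : k⸨X⸩} (hx : Transcendental k x)
    (hD : D x = x)
    (h : IsSolution (fun f => RatFunc.X * ratFuncDeriv f) RatFunc.X a0 a1 a3 q1 p1 q2 p2 w) :
    IsSolution D x a0 a1 a3 (substitution x hx q1) (substitution x hx p1) (substitution x hx q2)
      (substitution x hx p2) (substitution x hx w) := by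
  simpa using h.map (substitution x hx) (derivation_substitution_of_apply_eq_self hx hD)

variable [CharZero k]

lemma coeff_zero_expandZero {f : RatFunc k} (hf : expandZero f ∈ orderGE k 0) :
    (expandZero f).coeff 0 = f.num.eval 0 / f.denom.eval 0 := by
  rw [eq_div_iff (eval_denom_zero_ne_zero hf)]
  simpa [expandZero] using coeff_zero_substitution_mul_eval_denom _
    (orderGE_antitone zero_le_one (single_mem_orderGE 1 1)) hf

namespace IsSolution

variable (h : IsSolution (fun f => RatFunc.X * ratFuncDeriv f) RatFunc.X a0 a1 a3 q1 p1 q2 p2 w)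
include h

theorem expandZero_q1_mem_orderGE_zero : expandZero q1 ∈ orderGE k 0 :=
  (h.map_substitution _ eulerDeriv_single_one).q1_mem_orderGE_zero (single_mem_orderGE 1 1)
    (by simp)

theorem expandInfty_q1_mem_orderGE_zero : expandInfty q1 ∈ orderGE k 0 :=
  (h.map_substitution _ neg_eulerDeriv_single_neg_one).q1_mem_orderGE_zero_of_infinity
    (single_mem_orderGE (-1) 1) (by simp)

theorem coeff_zero_expandInfty_q1 : (expandInfty q1).coeff 0 = -2 * a0 + a3 :=
  (h.map_substitution _ neg_eulerDeriv_single_neg_one).coeff_q1_of_infinity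
    (single_mem_orderGE (-1) 1) (by simp)

theorem exists_int_expandAt_q1_sub_mem {c : k} (hc : c ≠ 0) :
    ∃ m : ℤ, expandAt hc q1 - (m : k) • HahnSeries.single (-1) 1 ∈ orderGE k 0 := by
  have hT := localVariable_mem_orderGE c
  have hT0 : (localVariable c).coeff 0 ≠ 0 := by simpa [coeff_localVariable] using hc
  have hsol : IsSolution (shiftedEulerDeriv k) (localVariable c) a0 a1 a3 (expandAt hc q1)
      (expandAt hc p1) (expandAt hc q2) (expandAt hc p2) (expandAt hc w) :=
    h.map_substitution _ (shiftedEulerDeriv_localVariable c)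
  obtain ⟨m, hm⟩ := hsol.exists_int_residue_q1_eq hT hT0
  refine ⟨m, mem_orderGE_add_one (n := -1) (sub_mem (hsol.q1_mem_orderGE_neg_one hT hT0)
    (Submodule.smul_mem _ _ (single_mem_orderGE (-1) 1))) ?_⟩
  simp [hm]

theorem exists_int_eq_sub_coeff_zero [IsAlgClosed k] :
    ∃ m : ℤ, -2 * a0 + a3 - (expandZero q1).coeff 0 = m := by
  classical
  have hres (c : k) : ∃ m : ℤ, ∀ hc : c ≠ 0,
      expandAt hc q1 - (m : k) • HahnSeries.single (-1) 1 ∈ orderGE k 0 := by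
    by_cases hc : c = 0
    · exact ⟨0, fun hc' => absurd hc hc'⟩
    · simpa [hc] using h.exists_int_expandAt_q1_sub_mem hc
  choose m hm using hres
  refine ⟨∑ c ∈ q1.denom.roots.toFinset, m c, ?_⟩
  rw [← h.coeff_zero_expandInfty_q1, coeff_zero_expandInfty_sub_coeff_zero_expandZero
    h.expandZero_q1_mem_orderGE_zero hm h.expandInfty_q1_mem_orderGE_zero, Int.cast_sum]

end IsSolution

end RationalSolutions

section Evaluation

lemma eventually_noPoleAt (f : RatFunc ℂ) : ∀ᶠ t in cofinite, NoPoleAt f t := by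
  filter_upwards [f.denom.roots.toFinset.finite_toSet.compl_mem_cofinite] with t ht hden
  exact ht (by simpa [f.denom_ne_zero] using hden)

/-- A rational function as a germ along the cofinite filter: two rational functions are equal once
their values agree outside a finite set. -/
def evRGerm : RatFunc ℂ →+* Germ (cofinite : Filter ℂ) ℂ where
  toFun f := ↑(evR f)
  map_one' := Germ.coe_eq.mpr (.of_forall fun _ => RatFunc.eval_one _ _)
  map_zero' := Germ.coe_eq.mpr (.of_forall fun _ => RatFunc.eval_zero _ _)
  map_add' f g := Germ.coe_eq.mpr <| by
    filter_upwards [eventually_noPoleAt f, eventually_noPoleAt g] with t hf hg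
    exact RatFunc.eval_add _ _ hf hg
  map_mul' f g := Germ.coe_eq.mpr <| by
    filter_upwards [eventually_noPoleAt f, eventually_noPoleAt g] with t hf hg
    exact RatFunc.eval_mul _ _ hf hg

lemma evRGerm_apply (f : RatFunc ℂ) : evRGerm f = ↑(evR f) := rfl

lemma evRGerm_algebraMap (P : ℂ[X]) :
    evRGerm (algebraMap ℂ[X] (RatFunc ℂ) P) = ↑(fun t => P.eval t) :=
  Germ.coe_eq.mpr (.of_forall fun t => by simp [evR])

lemma evR_ratFuncDeriv_eventuallyEq (f : RatFunc ℂ) :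
    evR (ratFuncDeriv f) =ᶠ[cofinite] deriv (evR f) := by
  have h := congrArg evRGerm (ratFuncDeriv_mul_denom_sq f)
  rw [map_mul, evRGerm_algebraMap, evRGerm_algebraMap, evRGerm_apply, ← Germ.coe_mul,
    Germ.coe_eq] at h
  filter_upwards [eventually_noPoleAt f, h] with t hf ht
  have hderiv : HasDerivAt (evR f) _ t :=
    (f.num.hasDerivAt t).fun_div (f.denom.hasDerivAt t) hf
  rw [hderiv.deriv, eq_div_iff (pow_ne_zero 2 hf)]
  simpa using ht

theorem IsSolution.of_isSasanoSol {a0 a1 a3 : ℂ} {q1 p1 q2 p2 : RatFunc ℂ}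
    (hsol : IsSasanoSol a0 a1 a3 q1 p1 q2 p2) :
    IsSolution (fun f => RatFunc.X * ratFuncDeriv f) RatFunc.X a0 a1 a3 q1 p1 q2 p2
      (algebraMap ℂ (RatFunc ℂ) (a0 + a1 + a3) + 2 * (q1 * p1) + 2 * (q2 * p2)) := by
  have hX : evRGerm RatFunc.X = ↑(fun t : ℂ => t) := by
    simpa using evRGerm_algebraMap X
  have hC (a : ℂ) : evRGerm (algebraMap ℂ (RatFunc ℂ) a) = ↑(fun _ : ℂ => a) := by
    simpa using evRGerm_algebraMap (C a)
  have hreg := (eventually_noPoleAt q1).and <| (eventually_noPoleAt p1).and <|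
    (eventually_noPoleAt q2).and (eventually_noPoleAt p2)
  constructor
  · rfl
  all_goals
    apply evRGerm.injective
    simp only [map_add, map_sub, map_mul, map_one, map_ofNat, hX, hC, evRGerm_apply]
    norm_cast
    filter_upwards [hreg, evR_ratFuncDeriv_eventuallyEq q1, evR_ratFuncDeriv_eventuallyEq p1,
      evR_ratFuncDeriv_eventuallyEq q2, evR_ratFuncDeriv_eventuallyEq p2]
      with t ⟨hq1, hp1, hq2, hp2⟩ hdq1 hdp1 hdq2 hdp2
    obtain ⟨h1, h2, h3, h4⟩ := hsol t hq1 hp1 hq2 hp2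
    simp only [Pi.mul_apply, Pi.add_apply, Pi.sub_apply, Pi.ofNat_apply]
    grind

theorem IsSolution.noPoleAt_zero_and_exists_int {a0 a1 a3 : ℂ} {q1 p1 q2 p2 w : RatFunc ℂ}
    (h : IsSolution (fun f => RatFunc.X * ratFuncDeriv f) RatFunc.X a0 a1 a3 q1 p1 q2 p2 w) :
    NoPoleAt q1 0 ∧ ∃ m : ℤ, -2 * a0 + a3 - evR q1 0 = m := by
  have hreg := h.expandZero_q1_mem_orderGE_zero
  have hval : evR q1 0 = (expandZero q1).coeff 0 := (coeff_zero_expandZero hreg).symm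
  exact ⟨eval_denom_zero_ne_zero hreg, hval ▸ h.exists_int_eq_sub_coeff_zero⟩

end Evaluation

end

end Sasano

theorem sasano_value_difference_integer (a0 a1 a2 a3 : ℂ)
    (hpar : a0 + a1 + 2 * a2 + a3 = 1 / 2)
    (q1 p1 q2 p2 : RatFunc ℂ)
    (hsol : IsSasanoSol a0 a1 a3 q1 p1 q2 p2) :
    NoPoleAt q1 0 ∧ NoPoleAt q2 0 ∧
    (∃ m : ℤ, (-2 * a0 + a3) - evR q1 0 = m) ∧
    (∃ n : ℤ, (-2 * a1 + a3) - evR q2 0 = n) := by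
  have h := Sasano.IsSolution.of_isSasanoSol hsol
  obtain ⟨hpole1, hint1⟩ := h.noPoleAt_zero_and_exists_int
  obtain ⟨hpole2, hint2⟩ := h.swap.noPoleAt_zero_and_exists_int
  exact ⟨hpole1, hpole2, hint1, hint2⟩
end
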